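/- Let A(u) = (3/16)u⁻² on U = {(u,v,y,z) ∈ ℝ⁴ : u > 0} and consider the conformally flat plane wave metric 2H = A(u)(y² + z²). Then the quotient of the real vector space of Killing tensors of g by its subspace of reducible Killing tensors has dimension exactly 6. -/

import Mathlib

noncomputable section

/-- Points of (an open subset of) `ℝ⁴`, with coordinates `(u,v,y,z)` indexed by `0,1,2,3`. -/
abbrev Pt : Type := Fin 4 → ℝ

/-- Partial derivative of a function in the `i`-th coordinate direction. -/
def pd (i : Fin 4) (f : Pt → ℝ) (p : Pt) : ℝ :=
  fderiv ℝ f p (Pi.single i 1)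

/-- Kronecker delta `δ^i_a`. -/
def kd (i a : Fin 4) : ℝ := if i = a then 1 else 0

/-- Symmetrized product of Kronecker deltas, `δ_{(a}^i δ_{b)}^j`. -/
def sd (i j a b : Fin 4) : ℝ := (kd i a * kd j b + kd j a * kd i b) / 2

/-- Components of the pp-wave metric `g = -2 du dv - 2H du² + dy² + dz²`. -/
def ppMetric (H : Pt → ℝ) (p : Pt) (a b : Fin 4) : ℝ :=
  if a = 0 ∧ b = 0 then -2 * H p
  else if (a = 0 ∧ b = 1) ∨ (a = 1 ∧ b = 0) then -1
  else if (a = 2 ∧ b = 2) ∨ (a = 3 ∧ b = 3) then 1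
  else 0

/-- Christoffel symbols `Γ^d_{ab}` of the pp-wave metric:
`Γ^v_{uu} = H_{,u}`, `Γ^y_{uu} = Γ^v_{uy} = Γ^v_{yu} = H_{,y}`,
`Γ^z_{uu} = Γ^v_{uz} = Γ^v_{zu} = H_{,z}`, all others zero. -/
def Gamma (H : Pt → ℝ) (p : Pt) (d a b : Fin 4) : ℝ :=
  if d = 1 ∧ a = 0 ∧ b = 0 then pd 0 H p
  else if (d = 2 ∧ a = 0 ∧ b = 0) ∨ (d = 1 ∧ ((a = 0 ∧ b = 2) ∨ (a = 2 ∧ b = 0))) then pd 2 H p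
  else if (d = 3 ∧ a = 0 ∧ b = 0) ∨ (d = 1 ∧ ((a = 0 ∧ b = 3) ∨ (a = 3 ∧ b = 0))) then pd 3 H p
  else 0

/-- Covariant derivative of a covector field: `∇_a X_b = ∂_a X_b - Γ^d_{ab} X_d`. -/
def covD1 (H : Pt → ℝ) (X : Pt → Fin 4 → ℝ) (p : Pt) (a b : Fin 4) : ℝ :=
  pd a (fun q => X q b) p - ∑ d, Gamma H p d a b * X p d

/-- Covariant derivative of a 2-tensor field:
`∇_c T_{ab} = ∂_c T_{ab} - Γ^d_{ca} T_{db} - Γ^d_{cb} T_{ad}`. -/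
def covD2 (H : Pt → ℝ) (T : Pt → Fin 4 → Fin 4 → ℝ) (p : Pt) (c a b : Fin 4) : ℝ :=
  pd c (fun q => T q a b) p - ∑ d, Gamma H p d c a * T p d b
    - ∑ d, Gamma H p d c b * T p a d

/-- A Killing vector of the pp-wave metric on `U`, given by its covariant components:
a smooth covector field with `∇_{(a}X_{b)} = 0` on `U`. -/
def IsKillingVector (H : Pt → ℝ) (U : Set Pt) (X : Pt → Fin 4 → ℝ) : Prop :=
  (∀ a, ContDiffOn ℝ (⊤ : ℕ∞) (fun p => X p a) U) ∧
  ∀ p ∈ U, ∀ a b, covD1 H X p a b + covD1 H X p b a = 0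

/-- A (second order) Killing tensor of the pp-wave metric on `U`: a smooth symmetric
2-tensor field with `∇_{(c}K_{ab)} = 0` on `U`. -/
def IsKillingTensor (H : Pt → ℝ) (U : Set Pt) (K : Pt → Fin 4 → Fin 4 → ℝ) : Prop :=
  (∀ a b, ContDiffOn ℝ (⊤ : ℕ∞) (fun p => K p a b) U) ∧
  (∀ p a b, K p a b = K p b a) ∧
  ∀ p ∈ U, ∀ a b c,
    covD2 H K p c a b + covD2 H K p a b c + covD2 H K p b c a = 0

/-- A Killing tensor is reducible if (on `U`) it is a constant-coefficient linear combination
of the metric `g_{ab}` and finitely many symmetrized products `X_{(a}Y_{b)}` of Killing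
vectors `X`, `Y`. -/
def IsReducible (H : Pt → ℝ) (U : Set Pt) (K : Pt → Fin 4 → Fin 4 → ℝ) : Prop :=
  ∃ (c₀ : ℝ) (n : ℕ) (c : Fin n → ℝ) (X Y : Fin n → Pt → Fin 4 → ℝ),
    (∀ i, IsKillingVector H U (X i)) ∧ (∀ i, IsKillingVector H U (Y i)) ∧
    ∀ p ∈ U, ∀ a b, K p a b =
      c₀ * ppMetric H p a b + ∑ i, c i * ((X i p a * Y i p b + X i p b * Y i p a) / 2)



/-! ## The algebra of smooth functions on the half space -/

/-- The half space `u > 0`. -/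
def UU : Set Pt := {p | 0 < p 0}

lemma isOpen_UU : IsOpen UU := isOpen_lt continuous_const (continuous_apply 0)

/-- Extension by zero. -/
def ext0 (f : UU → ℝ) : Pt → ℝ := fun p => by
  classical exact if h : p ∈ UU then f ⟨p, h⟩ else 0

lemma ext0_apply (f : UU → ℝ) (p : UU) : ext0 f p = f p := by
  simp [ext0]

lemma ext0_of_mem (f : UU → ℝ) {p : Pt} (hp : p ∈ UU) : ext0 f p = f ⟨p, hp⟩ := by
  simp [ext0, hp]

/-- The algebra of smooth functions on `UU`. -/
def SU : Subalgebra ℝ (UU → ℝ) where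
  carrier := {f | ContDiffOn ℝ (⊤ : ℕ∞) (ext0 f) UU}
  mul_mem' := by
    intro f g hf hg
    refine (ContDiffOn.mul hf hg).congr ?_
    intro p hp
    simp [ext0_of_mem _ hp]
  add_mem' := by
    intro f g hf hg
    refine (ContDiffOn.add hf hg).congr ?_
    intro p hp
    simp [ext0_of_mem _ hp]
  algebraMap_mem' := by
    intro r
    refine (contDiffOn_const (c := r)).congr ?_
    intro p hp
    simp [ext0_of_mem _ hp]

instance SU_charZero : CharZero SU := by
  constructor
  intro m n h
  have h2 := congrArg (fun f : SU => f.1 ⟨fun _ => (1 : ℝ), show (0 : ℝ) < 1 from one_pos⟩) h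
  simpa using h2

lemma SU_smooth (f : SU) : ContDiffOn ℝ (⊤ : ℕ∞) (ext0 f.1) UU := f.2

/-- Restriction of a smooth function to `UU`. -/
def mkS (F : Pt → ℝ) (hF : ContDiffOn ℝ (⊤ : ℕ∞) F UU) : SU :=
  ⟨fun p => F p, hF.congr (fun p hp => by simp [ext0_of_mem _ hp])⟩

@[simp] lemma mkS_apply (F : Pt → ℝ) (hF : ContDiffOn ℝ (⊤ : ℕ∞) F UU) (p : UU) :
    (mkS F hF).1 p = F p := rfl

lemma pd_congr {f g : Pt → ℝ} (h : ∀ p ∈ UU, f p = g p) (i : Fin 4) {p : Pt} (hp : p ∈ UU) :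
    pd i f p = pd i g p := by
  unfold pd
  have : f =ᶠ[nhds p] g := by
    filter_upwards [isOpen_UU.mem_nhds hp] with q hq using h q hq
  rw [this.fderiv_eq]

lemma pd_smooth {f : Pt → ℝ} (hf : ContDiffOn ℝ (⊤ : ℕ∞) f UU) (i : Fin 4) :
    ContDiffOn ℝ (⊤ : ℕ∞) (pd i f) UU := by
  have h1 := hf.fderiv_of_isOpen (m := (⊤ : ℕ∞)) isOpen_UU (by simp)
  exact h1.clm_apply contDiffOn_const

lemma smooth_diffAt {f : Pt → ℝ} (hf : ContDiffOn ℝ (⊤ : ℕ∞) f UU) {p : Pt} (hp : p ∈ UU) :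
    DifferentiableAt ℝ f p :=
  ((hf.differentiableOn (by simp)) p hp).differentiableAt (isOpen_UU.mem_nhds hp)

lemma pd_comm {f : Pt → ℝ} (hf : ContDiffOn ℝ (⊤ : ℕ∞) f UU) (i j : Fin 4) {p : Pt}
    (hp : p ∈ UU) : pd i (pd j f) p = pd j (pd i f) p := by
  have hat : ContDiffAt ℝ (⊤ : ℕ∞) f p := (hf p hp).contDiffAt (isOpen_UU.mem_nhds hp)
  have hsym := hat.isSymmSndFDerivAt (by simp; exact WithTop.coe_le_coe.2 (le_top : (2 : ℕ∞) ≤ ⊤))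
  have h1 := hf.fderiv_of_isOpen (m := (⊤ : ℕ∞)) isOpen_UU (by simp)
  have hd : DifferentiableAt ℝ (fderiv ℝ f) p :=
    ((h1.differentiableOn (by simp)) p hp).differentiableAt (isOpen_UU.mem_nhds hp)
  have key : ∀ a b : Fin 4, pd a (pd b f) p
      = fderiv ℝ (fderiv ℝ f) p (Pi.single a 1) (Pi.single b 1) := by
    intro a b
    have : HasFDerivAt (pd b f)
        ((ContinuousLinearMap.apply ℝ ℝ (Pi.single b (1:ℝ) : Pt)).comp
          (fderiv ℝ (fderiv ℝ f) p)) p :=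
      (ContinuousLinearMap.apply ℝ ℝ (Pi.single b (1:ℝ) : Pt)).hasFDerivAt.comp p
        hd.hasFDerivAt
    unfold pd at this ⊢
    rw [this.fderiv]
    rfl
  rw [key, key]
  exact hsym _ _

/-- Underlying function of the partial derivative. -/
def dfun (i : Fin 4) (f : SU) : SU := mkS (pd i (ext0 f.1)) (pd_smooth f.2 i)

lemma dfun_apply (i : Fin 4) (f : SU) (p : UU) : (dfun i f).1 p = pd i (ext0 f.1) p := rfl

/-- Partial derivatives as derivations of `SU`. -/
def DD (i : Fin 4) : Derivation ℝ SU SU :=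
  Derivation.mk'
    { toFun := dfun i
      map_add' := by
        intro f g
        apply Subtype.ext
        funext p
        have e : pd i (ext0 (f + g).1) p = pd i (fun q => ext0 f.1 q + ext0 g.1 q) p :=
          pd_congr (fun q hq => by simp [ext0_of_mem _ hq]) i p.2
        rw [dfun_apply, e]
        show _ = (dfun i f).1 p + (dfun i g).1 p
        rw [dfun_apply, dfun_apply]
        unfold pd
        rw [fderiv_fun_add (smooth_diffAt f.2 p.2) (smooth_diffAt g.2 p.2)]
        rfl
      map_smul' := by
        intro c f
        apply Subtype.ext
        funext p
        have e : pd i (ext0 (c • f).1) p = pd i (fun q => c * ext0 f.1 q) p :=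
          pd_congr (fun q hq => by simp [ext0_of_mem _ hq]) i p.2
        rw [dfun_apply, e]
        show _ = c * (dfun i f).1 p
        rw [dfun_apply]
        unfold pd
        rw [fderiv_const_mul (smooth_diffAt f.2 p.2)]
        rfl }
    (by
      intro f g
      apply Subtype.ext
      funext p
      have e : pd i (ext0 (f * g).1) p = pd i (fun q => ext0 f.1 q * ext0 g.1 q) p :=
        pd_congr (fun q hq => by simp [ext0_of_mem _ hq]) i p.2
      show (dfun i (f * g)).1 p = f.1 p * (dfun i g).1 p + g.1 p * (dfun i f).1 p
      rw [dfun_apply, dfun_apply, dfun_apply, e]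
      unfold pd
      rw [fderiv_fun_mul (smooth_diffAt f.2 p.2) (smooth_diffAt g.2 p.2)]
      simp [ext0_apply])

lemma DD_apply (i : Fin 4) (f : SU) (p : UU) : (DD i f).1 p = pd i (ext0 f.1) p := rfl

lemma DD_mkS_apply (i : Fin 4) (F : Pt → ℝ) (hF : ContDiffOn ℝ (⊤ : ℕ∞) F UU) (p : UU) :
    (DD i (mkS F hF)).1 p = pd i F p := by
  rw [DD_apply]
  exact pd_congr (fun q hq => by simp [ext0_of_mem _ hq]) i p.2

lemma DD_comm (i j : Fin 4) (f : SU) : DD i (DD j f) = DD j (DD i f) := by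
  have key : ∀ a b : Fin 4, ∀ p : UU, (DD a (DD b f)).1 p = pd a (pd b (ext0 f.1)) p := by
    intro a b p
    exact DD_mkS_apply a _ (pd_smooth f.2 b) p
  apply Subtype.ext
  funext p
  rw [key, key]
  exact pd_comm f.2 i j p.2

lemma SU_ext {f g : SU} (h : ∀ p : UU, f.1 p = g.1 p) : f = g := Subtype.ext (funext h)

/-- Evaluation at a point. -/
def evS (p : UU) : SU →ₗ[ℝ] ℝ where
  toFun f := f.1 p
  map_add' _ _ := rfl
  map_smul' _ _ := rfl

lemma evS_mul (p : UU) (f g : SU) : evS p (f * g) = evS p f * evS p g := rfl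

lemma evS_one (p : UU) : evS p 1 = 1 := rfl

/-! ## Uniqueness for closed first order systems -/

lemma closed_system_zero {ι : Type} [Fintype ι] (f : ι → SU) (p₀ : UU)
    (hz : ∀ α, evS p₀ (f α) = 0)
    (hcl : ∀ i α, DD i (f α) ∈ Ideal.span (Set.range f)) : ∀ α, f α = 0 := by
  have hM : ∀ i α, ∃ M : ι → SU, ∑ β, M β * f β = DD i (f α) := by
    intro i α
    exact Ideal.mem_span_range_iff_exists_fun.1 (hcl i α)
  choose M hM using hM
  intro α₀
  apply SU_ext
  intro q
  -- the segment
  let w : Pt := q.1 - p₀.1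
  let γ : ℝ → Pt := fun s => p₀.1 + s • w
  have hγU : ∀ s ∈ Set.Icc (0:ℝ) 1, γ s ∈ UU := by
    intro s hs
    have h0 : 0 < p₀.1 0 := p₀.2
    have h1 : 0 < q.1 0 := q.2
    show 0 < (p₀.1 + s • (q.1 - p₀.1)) 0
    simp only [Pi.add_apply, Pi.smul_apply, Pi.sub_apply, smul_eq_mul]
    rcases eq_or_lt_of_le hs.1 with h | h
    · rw [← h]; simpa using h0
    · nlinarith [mul_pos h h1, mul_nonneg (sub_nonneg.2 hs.2) h0.le]
  have hγd : ∀ s, HasDerivAt γ w s := by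
    intro s
    have : HasDerivAt (fun s : ℝ => s • w) ((1:ℝ) • w) s := (hasDerivAt_id s).smul_const w
    simpa [γ] using this.const_add p₀.1
  have hγc : Continuous γ := by fun_prop
  let φ : ℝ → ι → ℝ := fun s α => ext0 (f α).1 (γ s)
  let φ' : ℝ → ι → ℝ := fun s α => ∑ i, w i * ext0 (DD i (f α)).1 (γ s)
  have hφ : ∀ s ∈ Set.Icc (0:ℝ) 1, HasDerivAt φ (φ' s) s := by
    intro s hs
    rw [hasDerivAt_pi]
    intro α
    have h1 := (smooth_diffAt (f α).2 (hγU s hs)).hasFDerivAt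
    have h2 := h1.comp_hasDerivAt s (hγd s)
    refine h2.congr_deriv ?_
    have hw : w = ∑ i, w i • (Pi.single i (1:ℝ) : Pt) := by
      ext j; simp [Finset.sum_apply, Pi.single_apply]
    conv_lhs => rw [hw]
    rw [map_sum]
    refine Finset.sum_congr rfl fun i _ => ?_
    rw [map_smul, smul_eq_mul, ext0_of_mem _ (hγU s hs)]
    rfl
  have hcont : ∀ g : SU, ContinuousOn (fun s => ext0 g.1 (γ s)) (Set.Icc 0 1) := by
    intro g
    exact g.2.continuousOn.comp hγc.continuousOn hγU
  have hbd : ∀ g : SU, ∃ C : ℝ, ∀ s ∈ Set.Icc (0:ℝ) 1, |ext0 g.1 (γ s)| ≤ C := by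
    intro g
    obtain ⟨C, hC⟩ := isCompact_Icc.exists_bound_of_continuousOn (hcont g)
    exact ⟨C, hC⟩
  choose C hC using hbd
  have hC0 : ∀ g, 0 ≤ C g := fun g => (abs_nonneg _).trans (hC g 0 (by simp))
  let K : ℝ := ∑ α, ∑ i, ∑ β, |w i| * C (M i α β)
  have hb : ∀ s ∈ Set.Ico (0:ℝ) 1, ‖φ' s‖ ≤ K * ‖φ s‖ := by
    intro s hs
    have hs' : s ∈ Set.Icc (0:ℝ) 1 := ⟨hs.1, hs.2.le⟩
    have hKnn : 0 ≤ K := Finset.sum_nonneg fun α _ => Finset.sum_nonneg fun i _ =>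
      Finset.sum_nonneg fun β _ => mul_nonneg (abs_nonneg _) (hC0 _)
    rw [pi_norm_le_iff_of_nonneg (mul_nonneg hKnn (norm_nonneg _))]
    intro α
    have e1 : φ' s α = ∑ i, ∑ β, w i * (ext0 (M i α β).1 (γ s) * φ s β) := by
      show ∑ i, w i * ext0 (DD i (f α)).1 (γ s) = _
      refine Finset.sum_congr rfl fun i _ => ?_
      rw [← Finset.mul_sum, ← hM i α, ext0_of_mem _ (hγU s hs')]
      congr 1
      have : ∀ p : UU, (∑ β, M i α β * f β : SU).1 p = ∑ β, (M i α β).1 p * (f β).1 p := by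
        intro p
        exact map_sum (evS p) (fun β => M i α β * f β) Finset.univ
      rw [this]
      refine Finset.sum_congr rfl fun β _ => ?_
      show _ = ext0 (M i α β).1 (γ s) * ext0 (f β).1 (γ s)
      rw [ext0_of_mem _ (hγU s hs'), ext0_of_mem _ (hγU s hs')]
    rw [e1]
    calc ‖∑ i, ∑ β, w i * (ext0 (M i α β).1 (γ s) * φ s β)‖
        ≤ ∑ i, ∑ β, ‖w i * (ext0 (M i α β).1 (γ s) * φ s β)‖ :=
          (norm_sum_le _ _).trans (Finset.sum_le_sum fun i _ => norm_sum_le _ _)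
      _ ≤ ∑ i, ∑ β, |w i| * C (M i α β) * ‖φ s‖ := by
          refine Finset.sum_le_sum fun i _ => Finset.sum_le_sum fun β _ => ?_
          rw [norm_mul, norm_mul, mul_assoc]
          refine mul_le_mul_of_nonneg_left ?_ (norm_nonneg _)
          exact mul_le_mul (hC _ s hs') (norm_le_pi_norm (φ s) β) (norm_nonneg _) (hC0 _)
      _ = (∑ i, ∑ β, |w i| * C (M i α β)) * ‖φ s‖ := by
          simp only [Finset.sum_mul]
      _ ≤ K * ‖φ s‖ := by
          refine mul_le_mul_of_nonneg_right ?_ (norm_nonneg _)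
          exact Finset.single_le_sum (f := fun α => ∑ i, ∑ β, |w i| * C (M i α β))
            (fun α _ => Finset.sum_nonneg fun i _ =>
              Finset.sum_nonneg fun β _ => mul_nonneg (abs_nonneg _) (hC0 _)) (Finset.mem_univ α)
  have hfin := eq_zero_of_abs_deriv_le_mul_abs_self_of_eq_zero_right (f := φ) (f' := φ')
    (K := K) (a := 0) (b := 1)
    (fun s hs => (hφ s hs).continuousAt.continuousWithinAt)
    (fun s hs => (hφ s ⟨hs.1, hs.2.le⟩).hasDerivWithinAt)
    (by
      funext α
      have := hz α
      show ext0 (f α).1 (p₀.1 + (0:ℝ) • w) = 0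
      rw [zero_smul, add_zero, ext0_apply]
      exact this) hb 1 (by simp)
  have := congrFun hfin α₀
  have e : γ 1 = q.1 := by simp [γ, w]
  simp only [φ, e, ext0_apply] at this
  exact this

/-! ## Special elements of `SU` -/

/-- The profile function of the wave. -/
def HH : Pt → ℝ := fun p => (3 / 16 / (p 0) ^ 2) * ((p 2) ^ 2 + (p 3) ^ 2) / 2

lemma HH_smooth : ContDiffOn ℝ (⊤ : ℕ∞) HH UU := by
  have h0 : ContDiffOn ℝ (⊤ : ℕ∞) (fun p : Pt => (p 0) ^ 2) UU := by fun_prop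
  have h1 : ContDiffOn ℝ (⊤ : ℕ∞) (fun p : Pt => 3 / 16 / (p 0) ^ 2) UU :=
    contDiffOn_const.div h0 (fun p hp => by
      have : 0 < p 0 := hp
      positivity)
  have h2 : ContDiffOn ℝ (⊤ : ℕ∞) (fun p : Pt => (p 2) ^ 2 + (p 3) ^ 2) UU := by fun_prop
  exact (h1.mul h2).div_const 2

/-- The coordinate functions. -/
def cS (i : Fin 4) : SU := mkS (fun p => p i) (by fun_prop)

/-- The profile function as an element of `SU`. -/
def HS : SU := mkS HH HH_smooth

lemma DD_cS (i j : Fin 4) : DD i (cS j) = if i = j then 1 else 0 := by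
  apply SU_ext
  intro p
  rw [cS, DD_mkS_apply]
  unfold pd
  rw [(hasFDerivAt_apply j p.1).fderiv]
  by_cases h : i = j
  · subst h; simp
  · simp [h, Pi.single_apply, Ne.symm h]

/-- The fourth root. -/
def tf (x : ℝ) : ℝ := x ^ (1 / 4 : ℝ)

lemma tf_pos {x : ℝ} (hx : 0 < x) : 0 < tf x := Real.rpow_pos_of_pos hx _

lemma tf_pow {x : ℝ} (hx : 0 < x) : tf x ^ 4 = x := by
  unfold tf
  rw [← Real.rpow_natCast, ← Real.rpow_mul hx.le]
  norm_num

lemma tf_of_pow {x a : ℝ} (ha : 0 < a) (h : x = a ^ 4) : tf x = a := by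
  subst h
  unfold tf
  rw [← Real.rpow_natCast, ← Real.rpow_mul ha.le]
  norm_num

lemma tf_smooth : ContDiffOn ℝ (⊤ : ℕ∞) (fun p : Pt => tf (p 0)) UU := by
  have h : ContDiffOn ℝ (⊤ : ℕ∞) (fun p : Pt => p 0) UU := by fun_prop
  exact h.rpow_const_of_ne (fun p hp => ne_of_gt hp)

/-- The fourth root of `u` and its inverse. -/
def tS : SU := mkS (fun p => tf (p 0)) tf_smooth

/-- The inverse of the fourth root of `u`. -/
def sS : SU := mkS (fun p => (tf (p 0))⁻¹) (tf_smooth.inv (fun p hp => (tf_pos hp).ne'))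

lemma ts_one : tS * sS = 1 := by
  apply SU_ext
  intro p
  exact mul_inv_cancel₀ (tf_pos p.2).ne'

lemma t_pow : tS ^ 4 = cS 0 := by
  apply SU_ext
  intro p
  exact tf_pow p.2

lemma nat_cancel {n : ℕ} (hn : n ≠ 0) {f g : SU} (h : (n : SU) * f = (n : SU) * g) : f = g := by
  apply SU_ext
  intro p
  have := congrArg (fun f : SU => f.1 p) h
  have h2 : ((n : ℝ)) * f.1 p = (n : ℝ) * g.1 p := this
  exact mul_left_cancel₀ (Nat.cast_ne_zero.2 hn) h2

lemma four_DDt (i : Fin 4) : 4 * DD i tS = if i = 0 then sS ^ 3 else 0 := by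
  have h := congrArg (DD i) t_pow
  rw [DD_cS] at h
  have h2 : DD i (tS ^ 4) = 4 * tS ^ 3 * DD i tS := by
    rw [Derivation.leibniz_pow]; simp [nsmul_eq_mul, smul_eq_mul]; ring
  rw [h2] at h
  have h3 : sS ^ 3 * tS ^ 3 = 1 := by
    rw [← mul_pow, mul_comm, ts_one, one_pow]
  have h4 : sS ^ 3 * (4 * tS ^ 3 * DD i tS) = 4 * DD i tS := by
    linear_combination (4 * DD i tS) * h3
  rw [← h4, h]
  split_ifs <;> simp

lemma DDs (i : Fin 4) : DD i sS = - sS ^ 2 * DD i tS := by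
  have h := congrArg (DD i) ts_one
  simp only [Derivation.leibniz, smul_eq_mul, Derivation.map_one_eq_zero] at h
  linear_combination sS * h - DD i sS * ts_one

lemma HS_eq : 32 * HS = 3 * sS ^ 8 * (cS 2 ^ 2 + cS 3 ^ 2) := by
  apply SU_ext
  intro p
  show (32 : ℝ) * ((3 / 16 / (p.1 0) ^ 2) * ((p.1 2) ^ 2 + (p.1 3) ^ 2) / 2)
    = 3 * ((tf (p.1 0))⁻¹) ^ 8 * (p.1 2 ^ 2 + p.1 3 ^ 2)
  have h1 := tf_pow p.2
  have h2 := (tf_pos p.2).ne'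
  have h3 : p.1 0 ^ 2 = tf (p.1 0) ^ 8 := by rw [← h1, ← pow_mul, h1]
  rw [h3]
  field_simp
  ring

lemma DD_ofNat_mul (i : Fin 4) (n : ℕ) (f : SU) : DD i ((n : SU) * f) = n * DD i f := by
  rw [Derivation.leibniz]; simp

lemma hu_eq : 16 * DD 0 HS = -3 * sS ^ 12 * (cS 2 ^ 2 + cS 3 ^ 2) := by
  apply nat_cancel (n := 2) (by norm_num)
  have h := congrArg (DD 0) HS_eq
  have h1 := DD_ofNat_mul 0 32 HS
  have h2 := DD_ofNat_mul 0 3 (sS ^ 8 * (cS 2 ^ 2 + cS 3 ^ 2))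
  have h3 := four_DDt 0
  push_cast at h1 h2
  rw [mul_assoc, h1, h2] at h
  simp [Derivation.leibniz, Derivation.leibniz_pow, DD_cS, DDs] at h h3
  push_cast
  linear_combination h - 6 * sS ^ 9 * (cS 2 ^ 2 + cS 3 ^ 2) * h3

lemma hx_eq (i : Fin 4) (hi : i = 2 ∨ i = 3) : 16 * DD i HS = 3 * sS ^ 8 * cS i := by
  apply nat_cancel (n := 2) (by norm_num)
  have h := congrArg (DD i) HS_eq
  have h1 := DD_ofNat_mul i 32 HS
  have h2 := DD_ofNat_mul i 3 (sS ^ 8 * (cS 2 ^ 2 + cS 3 ^ 2))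
  have h3 : DD i tS = 0 := by
    apply nat_cancel (n := 4) (by norm_num)
    have := four_DDt i
    rcases hi with rfl | rfl <;> simpa using this
  push_cast at h1 h2
  rw [mul_assoc, h1, h2] at h
  push_cast
  rcases hi with rfl | rfl <;>
  · simp [Derivation.leibniz, Derivation.leibniz_pow, DD_cS, DDs, h3] at h
    linear_combination h

/-! ## Killing vectors and tensors in `SU` -/

/-- Christoffel symbols. -/
def GG (d a b : Fin 4) : SU :=
  if d = 1 ∧ a = 0 ∧ b = 0 then DD 0 HS
  else if (d = 2 ∧ a = 0 ∧ b = 0) ∨ (d = 1 ∧ ((a = 0 ∧ b = 2) ∨ (a = 2 ∧ b = 0))) then DD 2 HS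
  else if (d = 3 ∧ a = 0 ∧ b = 0) ∨ (d = 1 ∧ ((a = 0 ∧ b = 3) ∨ (a = 3 ∧ b = 0))) then DD 3 HS
  else 0

lemma GG_apply (d a b : Fin 4) (p : UU) : (GG d a b).1 p = Gamma HH p d a b := by
  unfold GG Gamma HS
  split_ifs
  · exact DD_mkS_apply _ _ _ p
  · exact DD_mkS_apply _ _ _ p
  · exact DD_mkS_apply _ _ _ p
  · rfl

/-- Covariant derivative of a covector. -/
def cov1 (x : Fin 4 → SU) (a b : Fin 4) : SU := DD a (x b) - ∑ d, GG d a b * x d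

/-- Covariant derivative of a 2-tensor. -/
def cov2 (k : Fin 4 → Fin 4 → SU) (c a b : Fin 4) : SU :=
  DD c (k a b) - ∑ d, GG d c a * k d b - ∑ d, GG d c b * k a d

/-- Killing vectors. -/
def KV (x : Fin 4 → SU) : Prop := ∀ a b, cov1 x a b + cov1 x b a = 0

/-- Killing tensors. -/
def KT (k : Fin 4 → Fin 4 → SU) : Prop :=
  (∀ a b, k a b = k b a) ∧ ∀ a b c, cov2 k c a b + cov2 k a b c + cov2 k b c a = 0

lemma SU_sum_apply {ι : Type*} (s : Finset ι) (f : ι → SU) (p : UU) :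
    (∑ i ∈ s, f i : SU).1 p = ∑ i ∈ s, (f i).1 p := map_sum (evS p) f s

lemma cov1_apply (X : Pt → Fin 4 → ℝ) (x : Fin 4 → SU)
    (hx : ∀ a, ∀ p : UU, (x a).1 p = X p a) (a b : Fin 4) (p : UU) :
    (cov1 x a b).1 p = covD1 HH X p a b := by
  show (DD a (x b)).1 p - (∑ d, GG d a b * x d : SU).1 p = _
  rw [SU_sum_apply, DD_apply]
  unfold covD1
  congr 1
  · exact pd_congr (fun q hq => by rw [ext0_of_mem _ hq, hx]) a p.2
  · refine Finset.sum_congr rfl fun d _ => ?_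
    rw [← hx d p, ← GG_apply]; rfl

lemma cov2_apply (K : Pt → Fin 4 → Fin 4 → ℝ) (k : Fin 4 → Fin 4 → SU)
    (hk : ∀ a b, ∀ p : UU, (k a b).1 p = K p a b) (c a b : Fin 4) (p : UU) :
    (cov2 k c a b).1 p = covD2 HH K p c a b := by
  show (DD c (k a b)).1 p - (∑ d, GG d c a * k d b : SU).1 p
    - (∑ d, GG d c b * k a d : SU).1 p = _
  rw [SU_sum_apply, SU_sum_apply, DD_apply]
  unfold covD2
  congr 1
  · congr 1
    · exact pd_congr (fun q hq => by rw [ext0_of_mem _ hq, hk]) c p.2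
    · refine Finset.sum_congr rfl fun d _ => ?_
      rw [← hk d b p, ← GG_apply]; rfl
  · refine Finset.sum_congr rfl fun d _ => ?_
    rw [← hk a d p, ← GG_apply]; rfl

lemma KV_of {X : Pt → Fin 4 → ℝ} (hX : IsKillingVector HH UU X) :
    KV (fun a => mkS (fun p => X p a) (hX.1 a)) := by
  intro a b
  apply SU_ext
  intro p
  have h := hX.2 p p.2 a b
  rw [← cov1_apply X _ (fun a p => mkS_apply _ (hX.1 a) p),
    ← cov1_apply X _ (fun a p => mkS_apply _ (hX.1 a) p)] at h
  exact h

lemma KV_to {x : Fin 4 → SU} (hx : KV x) :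
    IsKillingVector HH UU (fun p a => ext0 (x a).1 p) := by
  refine ⟨fun a => (x a).2, fun p hp a b => ?_⟩
  have h := congrArg (fun f : SU => f.1 ⟨p, hp⟩) (hx a b)
  have e := cov1_apply (fun p a => ext0 (x a).1 p) x (fun a p => (ext0_apply _ p).symm)
  have h2 : (cov1 x a b).1 ⟨p, hp⟩ + (cov1 x b a).1 ⟨p, hp⟩ = 0 := h
  rw [e, e] at h2
  exact h2

lemma KT_of {K : Pt → Fin 4 → Fin 4 → ℝ} (hK : IsKillingTensor HH UU K) :
    KT (fun a b => mkS (fun p => K p a b) (hK.1 a b)) := by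
  refine ⟨fun a b => SU_ext fun p => hK.2.1 p a b, fun a b c => ?_⟩
  apply SU_ext
  intro p
  have h := hK.2.2 p p.2 a b c
  have e := cov2_apply K _ (fun a b p => mkS_apply _ (hK.1 a b) p)
  rw [← e, ← e, ← e] at h
  exact h

lemma KT_to {k : Fin 4 → Fin 4 → SU} (hk : KT k) :
    IsKillingTensor HH UU (fun p a b => ext0 (k a b).1 p) := by
  refine ⟨fun a b => (k a b).2, fun p a b => ?_, fun p hp a b c => ?_⟩
  · show ext0 (k a b).1 p = ext0 (k b a).1 p
    rw [hk.1 a b]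
  have h := congrArg (fun f : SU => f.1 ⟨p, hp⟩) (hk.2 a b c)
  have e := cov2_apply (fun p a b => ext0 (k a b).1 p) k (fun a b p => (ext0_apply _ p).symm)
  have h2 : (cov2 k c a b).1 ⟨p, hp⟩ + (cov2 k a b c).1 ⟨p, hp⟩
    + (cov2 k b c a).1 ⟨p, hp⟩ = 0 := h
  rw [e, e, e] at h2
  exact h2

/-! ## Prolongation -/

/-- The jet family of a Killing vector. -/
def jet1 (x : Fin 4 → SU) : (Fin 4) ⊕ (Fin 4 × Fin 4) → SU
  | Sum.inl a => x a
  | Sum.inr (i, a) => DD i (x a)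

/-- The jet family of a Killing tensor. -/
def jet2 (k : Fin 4 → Fin 4 → SU) :
    (Fin 4 × Fin 4) ⊕ (Fin 4 × Fin 4 × Fin 4) ⊕ (Fin 4 × Fin 4 × Fin 4 × Fin 4) → SU
  | Sum.inl (a, b) => k a b
  | Sum.inr (Sum.inl (i, a, b)) => DD i (k a b)
  | Sum.inr (Sum.inr (i, j, a, b)) => DD i (DD j (k a b))

lemma half_mem {I : Ideal SU} {n : ℕ} (hn : n ≠ 0) {f : SU} (h : (n : SU) * f ∈ I) : f ∈ I := by
  have h1 : algebraMap ℝ SU ((n : ℝ)⁻¹) * ((n : SU) * f) ∈ I := I.mul_mem_left _ h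
  have h2 : algebraMap ℝ SU ((n : ℝ)⁻¹) * ((n : SU) * f) = f := by
    apply SU_ext
    intro p
    show (n : ℝ)⁻¹ * ((n : ℝ) * f.1 p) = f.1 p
    have : (n : ℝ) ≠ 0 := Nat.cast_ne_zero.2 hn
    field_simp
  rwa [h2] at h1

lemma KV_unique {x : Fin 4 → SU} (hx : KV x) (p₀ : UU)
    (h0 : ∀ a, evS p₀ (x a) = 0) (h1 : ∀ i a, evS p₀ (DD i (x a)) = 0) : ∀ a, x a = 0 := by
  set I := Ideal.span (Set.range (jet1 x)) with hI
  have m0 : ∀ a, x a ∈ I := fun a => Ideal.subset_span ⟨Sum.inl a, rfl⟩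
  have m1 : ∀ i a, DD i (x a) ∈ I := fun i a => Ideal.subset_span ⟨Sum.inr (i, a), rfl⟩
  have hQ : ∀ a b, ∃ Q : SU, DD a (x b) + DD b (x a) = Q ∧ ∀ i, DD i Q ∈ I := by
    intro a b
    refine ⟨∑ d, (GG d a b + GG d b a) * x d, ?_, ?_⟩
    · have := hx a b
      unfold cov1 at this
      simp only [add_mul, Finset.sum_add_distrib]
      linear_combination this
    · intro i
      rw [map_sum]
      refine I.sum_mem fun d _ => ?_
      rw [Derivation.leibniz]
      exact I.add_mem (I.mul_mem_left _ (m1 i d)) (I.mul_mem_right _ (m0 d))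
  have m2 : ∀ i j a, DD i (DD j (x a)) ∈ I := by
    intro i j a
    obtain ⟨Q1, e1, q1⟩ := hQ j a
    obtain ⟨Q2, e2, q2⟩ := hQ i a
    obtain ⟨Q3, e3, q3⟩ := hQ i j
    have d1 := congrArg (DD i) e1
    have d2 := congrArg (DD j) e2
    have d3 := congrArg (DD a) e3
    rw [map_add] at d1 d2 d3
    rw [DD_comm j i (x a)] at d2
    rw [DD_comm a i (x j), DD_comm a j (x i)] at d3
    have : ((2 : ℕ) : SU) * DD i (DD j (x a)) = DD i Q1 + DD j Q2 - DD a Q3 := by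
      push_cast
      linear_combination d1 + d2 - d3
    exact half_mem (n := 2) (by norm_num)
      (this ▸ I.sub_mem (I.add_mem (q1 i) (q2 j)) (q3 a))
  have := closed_system_zero (jet1 x) p₀ (by
    rintro (a | ⟨i, a⟩)
    · exact h0 a
    · exact h1 i a) (by
    rintro i (a | ⟨j, a⟩)
    · exact m1 i a
    · exact m2 i j a)
  exact fun a => this (Sum.inl a)

lemma KT_unique {k : Fin 4 → Fin 4 → SU} (hk : KT k) (p₀ : UU)
    (h0 : ∀ a b, evS p₀ (k a b) = 0) (h1 : ∀ i a b, evS p₀ (DD i (k a b)) = 0)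
    (h2 : ∀ i j a b, evS p₀ (DD i (DD j (k a b))) = 0) : ∀ a b, k a b = 0 := by
  set I := Ideal.span (Set.range (jet2 k)) with hI
  have m0 : ∀ a b, k a b ∈ I := fun a b => Ideal.subset_span ⟨Sum.inl (a, b), rfl⟩
  have m1 : ∀ i a b, DD i (k a b) ∈ I :=
    fun i a b => Ideal.subset_span ⟨Sum.inr (Sum.inl (i, a, b)), rfl⟩
  have m2 : ∀ i j a b, DD i (DD j (k a b)) ∈ I :=
    fun i j a b => Ideal.subset_span ⟨Sum.inr (Sum.inr (i, j, a, b)), rfl⟩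
  have hprod : ∀ (g : SU) (a b i j : Fin 4), DD i (DD j (g * k a b)) ∈ I := by
    intro g a b i j
    simp only [Derivation.leibniz, smul_eq_mul, map_add]
    exact I.add_mem
      (I.add_mem (I.mul_mem_left _ (m2 i j a b)) (I.mul_mem_right _ (m1 j a b)))
      (I.add_mem (I.mul_mem_right _ (m0 a b)) (I.mul_mem_left _ (m1 i a b)))
  have hsum : ∀ (g : Fin 4 → SU) (r s : Fin 4 → Fin 4) (i j : Fin 4),
      DD i (DD j (∑ d, g d * k (r d) (s d))) ∈ I := by
    intro g r s i j
    rw [map_sum, map_sum]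
    exact I.sum_mem fun d _ => hprod _ _ _ i j
  have R : ∀ i j a b c, DD i (DD j (DD a (k b c))) + DD i (DD j (DD b (k a c)))
      + DD i (DD j (DD c (k a b))) ∈ I := by
    intro i j a b c
    have e : DD a (k b c) + DD b (k a c) + DD c (k a b) =
        (∑ d, GG d c a * k d b) + (∑ d, GG d c b * k a d) + (∑ d, GG d a b * k d c)
        + (∑ d, GG d a c * k b d) + (∑ d, GG d b c * k d a) + (∑ d, GG d b a * k c d) := by
      have := hk.2 a b c
      unfold cov2 at this
      rw [hk.1 c a] at this
      linear_combination this
    rw [← map_add, ← map_add, ← map_add, ← map_add, e]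
    simp only [map_add]
    exact I.add_mem (I.add_mem (I.add_mem (I.add_mem (I.add_mem
      (hsum _ (fun d => d) (fun _ => b) i j) (hsum _ (fun _ => a) (fun d => d) i j))
      (hsum _ (fun d => d) (fun _ => c) i j)) (hsum _ (fun _ => b) (fun d => d) i j))
      (hsum _ (fun d => d) (fun _ => a) i j)) (hsum _ (fun _ => c) (fun d => d) i j)
  have m3 : ∀ i j l a b, DD i (DD j (DD l (k a b))) ∈ I := by
    intro i j l a b
    let T : Fin 4 → Fin 4 → Fin 4 → Fin 4 → Fin 4 → SU := fun i j l a b =>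
      DD i (DD j (DD l (k a b)))
    have s1 : ∀ i j l a b, T i j l a b = T j i l a b := fun i j l a b => DD_comm _ _ _
    have s2 : ∀ i j l a b, T i j l a b = T i l j a b := fun i j l a b => by
      show DD i (DD j (DD l (k a b))) = DD i (DD l (DD j (k a b)))
      rw [DD_comm j l]
    have s3 : ∀ i j l a b, T i j l a b = T i j l b a := fun i j l a b => by
      show DD i (DD j (DD l (k a b))) = DD i (DD j (DD l (k b a)))
      rw [hk.1 a b]
    have R' : ∀ i j a b c, T i j a b c + T i j b a c + T i j c a b ∈ I := R
    -- the ten derivatives with the five given indices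
    have key : ((6 : ℕ) : SU) * T i j l a b =
        2 * ((T i j l a b + T i j a l b + T i j b l a) + (T i l j a b + T i l a j b + T i l b j a)
          + (T j l i a b + T j l a i b + T j l b i a))
        + 2 * (T a b i j l + T a b j i l + T a b l i j)
        - ((T i a j l b + T i a l j b + T i a b j l) + (T i b j l a + T i b l j a + T i b a j l)
          + (T j a i l b + T j a l i b + T j a b i l) + (T j b i l a + T j b l i a + T j b a i l)
          + (T l a i j b + T l a j i b + T l a b i j) + (T l b i j a + T l b j i a
            + T l b a i j)) := by
      push_cast
      clear_value T
      simp only [s1, s2, s3]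
      ring
    refine half_mem (n := 6) (by norm_num) (key ▸ ?_)
    exact I.sub_mem (I.add_mem (I.mul_mem_left _ (I.add_mem (I.add_mem (R' _ _ _ _ _)
      (R' _ _ _ _ _)) (R' _ _ _ _ _))) (I.mul_mem_left _ (R' _ _ _ _ _)))
      (I.add_mem (I.add_mem (I.add_mem (I.add_mem (I.add_mem (R' _ _ _ _ _) (R' _ _ _ _ _))
      (R' _ _ _ _ _)) (R' _ _ _ _ _)) (R' _ _ _ _ _)) (R' _ _ _ _ _))
  have := closed_system_zero (jet2 k) p₀ (by
    rintro (⟨a, b⟩ | ⟨i, a, b⟩ | ⟨i, j, a, b⟩)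
    · exact h0 a b
    · exact h1 i a b
    · exact h2 i j a b) (by
    rintro i (⟨a, b⟩ | ⟨j, a, b⟩ | ⟨j, l, a, b⟩)
    · exact m1 i a b
    · exact m2 i j a b
    · exact m3 i j l a b)
  exact fun a b => this (Sum.inl (a, b))
set_option linter.unusedSimpArgs false
set_option linter.unnecessarySeqFocus false
set_option linter.unusedVariables false
set_option maxHeartbeats 1000000

/-! ## Taylor coefficients at the base point `(1,0,0,0)` -/

/-- Normalized iterated derivatives, indexed by integers. -/
def tay (D : Derivation ℝ SU SU) (n : ℤ) : SU →ₗ[ℝ] SU :=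
  if 0 ≤ n then ((n.toNat.factorial : ℝ)⁻¹) • ((D : SU →ₗ[ℝ] SU) ^ n.toNat) else 0

lemma tay_neg (D : Derivation ℝ SU SU) {n : ℤ} (hn : n < 0) : tay D n = 0 := by
  simp [tay, not_le.2 hn]

lemma tay_nat (D : Derivation ℝ SU SU) (n : ℕ) (f : SU) :
    tay D n f = ((n.factorial : ℝ)⁻¹) • ((D : SU →ₗ[ℝ] SU) ^ n) f := by
  simp [tay]

lemma tay_D (D : Derivation ℝ SU SU) (n : ℤ) (f : SU) :
    tay D n (D f) = ((n : ℝ) + 1) • tay D (n + 1) f := by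
  rcases lt_trichotomy n (-1) with h | h | h
  · rw [tay_neg D (by omega), tay_neg D (by omega)]; simp
  · subst h; rw [tay_neg D (by omega)]; simp
  · lift n to ℕ using (by omega)
    rw [tay_nat, show ((n : ℤ) + 1) = ((n + 1 : ℕ) : ℤ) by push_cast; rfl, tay_nat, smul_smul,
      pow_succ, Nat.factorial_succ]
    have : (n.factorial : ℝ) ≠ 0 := Nat.cast_ne_zero.2 n.factorial_ne_zero
    have h2 : ((n : ℝ) + 1) ≠ 0 := by positivity
    congr 1
    push_cast
    field_simp

lemma tay_comm (D D' : Derivation ℝ SU SU) (h : ∀ f, D (D' f) = D' (D f)) (n : ℤ) (f : SU) :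
    tay D n (D' f) = D' (tay D n f) := by
  rcases lt_or_ge n 0 with hn | hn
  · rw [tay_neg D hn]; simp
  · lift n to ℕ using hn
    rw [tay_nat, tay_nat, Derivation.map_smul]
    congr 1
    induction n generalizing f with
    | zero => rfl
    | succ n ih =>
      rw [pow_succ]
      show ((D : SU →ₗ[ℝ] SU) ^ n) (D (D' f)) = D' (((D : SU →ₗ[ℝ] SU) ^ n) (D f))
      rw [h, ih]

lemma tay_const (D : Derivation ℝ SU SU) (x : SU) (hx : D x = 0) (n : ℤ) (f : SU) :
    tay D n (x * f) = x * tay D n f := by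
  rcases lt_or_ge n 0 with hn | hn
  · rw [tay_neg D hn]; simp
  · lift n to ℕ using hn
    rw [tay_nat, tay_nat, mul_smul_comm]
    congr 1
    induction n generalizing f with
    | zero => rfl
    | succ n ih =>
      rw [pow_succ]
      show ((D : SU →ₗ[ℝ] SU) ^ n) (D (x * f)) = x * (((D : SU →ₗ[ℝ] SU) ^ n) (D f))
      rw [← ih, Derivation.leibniz, hx]; simp

lemma tay_x (D : Derivation ℝ SU SU) (x : SU) (hx : D x = 1) (n : ℤ) (f : SU) :
    tay D n (x * f) = x * tay D n f + tay D (n - 1) f := by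
  rcases lt_trichotomy n 0 with h | h | h
  · rw [tay_neg D h, tay_neg D (by omega)]; simp
  · subst h; rw [tay_neg D (by omega : (0:ℤ) - 1 < 0)]; simp [tay]
  · have key : ∀ (m : ℕ) (f : SU), ((D : SU →ₗ[ℝ] SU) ^ (m + 1)) (x * f)
        = x * ((D : SU →ₗ[ℝ] SU) ^ (m + 1)) f + ((m : ℝ) + 1) • ((D : SU →ₗ[ℝ] SU) ^ m) f := by
      intro m
      induction m with
      | zero => intro f; simp [Derivation.leibniz, hx]
      | succ m ih =>
        intro f
        rw [pow_succ]
        show ((D : SU →ₗ[ℝ] SU) ^ (m + 1)) (D (x * f))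
          = x * ((D : SU →ₗ[ℝ] SU) ^ (m + 1)) (D f) + _
        rw [Derivation.leibniz, hx, map_add, smul_eq_mul, ih]
        simp only [smul_eq_mul, mul_one]
        have : ((D : SU →ₗ[ℝ] SU) ^ m) (D f) = ((D : SU →ₗ[ℝ] SU) ^ (m + 1)) f := by
          rw [pow_succ]; rfl
        rw [this, add_assoc]
        congr 1
        push_cast
        rw [add_smul ((m : ℝ) + 1) 1, one_smul]
    obtain ⟨m, rfl⟩ : ∃ m : ℕ, n = ((m + 1 : ℕ) : ℤ) := ⟨(n - 1).toNat, by omega⟩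
    rw [show (((m + 1 : ℕ) : ℤ) - 1) = (m : ℤ) by push_cast; ring, tay_nat, tay_nat, tay_nat, key,
      smul_add, mul_smul_comm, smul_smul, Nat.factorial_succ]
    congr 2
    have : (m.factorial : ℝ) ≠ 0 := Nat.cast_ne_zero.2 m.factorial_ne_zero
    push_cast
    field_simp

/-- The base point. -/
def pbase : UU := ⟨![1, 0, 0, 0], by show (0:ℝ) < 1; norm_num⟩

/-- Taylor coefficients at the base point. -/
def tau (a b c d : ℤ) : SU →ₗ[ℝ] ℝ :=
  (evS pbase) ∘ₗ (tay (DD 0) a) ∘ₗ (tay (DD 1) b) ∘ₗ (tay (DD 2) c) ∘ₗ (tay (DD 3) d)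

lemma tau_def (a b c d : ℤ) (f : SU) : tau a b c d f =
    evS pbase (tay (DD 0) a (tay (DD 1) b (tay (DD 2) c (tay (DD 3) d f)))) := rfl

lemma tau_D0 (a b c d : ℤ) (f : SU) :
    tau a b c d (DD 0 f) = ((a : ℝ) + 1) * tau (a + 1) b c d f := by
  rw [tau_def, tau_def, tay_comm _ _ (DD_comm 3 0), tay_comm _ _ (DD_comm 2 0),
    tay_comm _ _ (DD_comm 1 0), tay_D, map_smul, smul_eq_mul]

lemma tau_D1 (a b c d : ℤ) (f : SU) :
    tau a b c d (DD 1 f) = ((b : ℝ) + 1) * tau a (b + 1) c d f := by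
  rw [tau_def, tau_def, tay_comm _ _ (DD_comm 3 1), tay_comm _ _ (DD_comm 2 1),
    tay_D, map_smul, map_smul, smul_eq_mul]

lemma tau_D2 (a b c d : ℤ) (f : SU) :
    tau a b c d (DD 2 f) = ((c : ℝ) + 1) * tau a b (c + 1) d f := by
  rw [tau_def, tau_def, tay_comm _ _ (DD_comm 3 2), tay_D, map_smul, map_smul, map_smul,
    smul_eq_mul]

lemma tau_D3 (a b c d : ℤ) (f : SU) :
    tau a b c d (DD 3 f) = ((d : ℝ) + 1) * tau a b c (d + 1) f := by
  rw [tau_def, tau_def, tay_D, map_smul, map_smul, map_smul, map_smul, smul_eq_mul]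

lemma tau_u (a b c d : ℤ) (f : SU) :
    tau a b c d (cS 0 * f) = tau a b c d f + tau (a - 1) b c d f := by
  rw [tau_def, tau_def, tau_def, tay_const (DD 3) _ (by simp [DD_cS]),
    tay_const (DD 2) _ (by simp [DD_cS]), tay_const (DD 1) _ (by simp [DD_cS]),
    tay_x (DD 0) _ (by simp [DD_cS]), map_add, evS_mul]
  have : evS pbase (cS 0) = 1 := rfl
  rw [this, one_mul]

lemma tau_y (a b c d : ℤ) (f : SU) :
    tau a b c d (cS 2 * f) = tau a b (c - 1) d f := by
  rw [tau_def, tau_def, tay_const (DD 3) _ (by simp [DD_cS]),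
    tay_x (DD 2) _ (by simp [DD_cS]), map_add, map_add, map_add,
    tay_const (DD 1) _ (by simp [DD_cS]), tay_const (DD 0) _ (by simp [DD_cS]), evS_mul]
  have : evS pbase (cS 2) = 0 := rfl
  rw [this, zero_mul, zero_add]

lemma tau_z (a b c d : ℤ) (f : SU) :
    tau a b c d (cS 3 * f) = tau a b c (d - 1) f := by
  rw [tau_def, tau_def, tay_x (DD 3) _ (by simp [DD_cS]), map_add, map_add, map_add, map_add,
    tay_const (DD 2) _ (by simp [DD_cS]),
    tay_const (DD 1) _ (by simp [DD_cS]), tay_const (DD 0) _ (by simp [DD_cS]), evS_mul]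
  have : evS pbase (cS 3) = 0 := rfl
  rw [this, zero_mul, zero_add]

lemma tau_num (m : ℕ) [m.AtLeastTwo] (a b c d : ℤ) (f : SU) :
    tau a b c d ((ofNat(m) : SU) * f) = (ofNat(m) : ℝ) * tau a b c d f := by
  have : (ofNat(m) : SU) * f = (ofNat(m) : ℝ) • f := by
    apply SU_ext; intro p; rfl
  rw [this, map_smul, smul_eq_mul]

/-- Taylor coefficients with a negative index vanish. -/
lemma tau_neg (a b c d : ℤ) (h : a < 0 ∨ b < 0 ∨ c < 0 ∨ d < 0) (f : SU) :
    tau a b c d f = 0 := by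
  rw [tau_def]
  rcases h with h | h | h | h <;> rw [tay_neg _ h] <;> simp

lemma hyu (i : Fin 4) (hi : i = 2 ∨ i = 3) : 16 * cS 0 ^ 2 * DD i HS = 3 * cS i := by
  have h : cS 0 ^ 2 * sS ^ 8 = 1 := by
    rw [← t_pow, ← pow_mul, ← mul_pow, ts_one, one_pow]
  linear_combination cS 0 ^ 2 * hx_eq i hi + 3 * cS i * h

lemma huu : 16 * cS 0 ^ 3 * DD 0 HS = -3 * (cS 2 ^ 2 + cS 3 ^ 2) := by
  have h : cS 0 ^ 3 * sS ^ 12 = 1 := by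
    rw [← t_pow, ← pow_mul, ← mul_pow, ts_one, one_pow]
  linear_combination cS 0 ^ 3 * hu_eq - 3 * (cS 2 ^ 2 + cS 3 ^ 2) * h

lemma cov2_expand (k : Fin 4 → Fin 4 → SU) (c a b : Fin 4) : cov2 k c a b = DD c (k a b)
    - (GG 0 c a * k 0 b + GG 1 c a * k 1 b + GG 2 c a * k 2 b + GG 3 c a * k 3 b)
    - (GG 0 c b * k a 0 + GG 1 c b * k a 1 + GG 2 c b * k a 2 + GG 3 c b * k a 3) := by
  rw [cov2, Fin.sum_univ_four, Fin.sum_univ_four]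

lemma rec000 {k : Fin 4 → Fin 4 → SU} (hk : KT k) (a b c d : ℤ) :
    48 * ((a + 1) * tau (a + 1) b c d (k 0 0) + 3 * a * tau a b c d (k 0 0) + 3 * (a - 1) * tau (a - 1) b c d (k 0 0) + (a - 2) * tau (a - 1 - 1) b c d (k 0 0))
      + 18 * (tau a b (c - 1 - 1) d (k 0 1) + tau a b c (d - 1 - 1) (k 0 1))
      - 18 * (tau a b (c - 1) d (k 0 2) + tau (a - 1) b (c - 1) d (k 0 2))
      - 18 * (tau a b c (d - 1) (k 0 3) + tau (a - 1) b c (d - 1) (k 0 3)) = 0 := by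
  have e := hk.2 0 0 0
  simp only [cov2_expand] at e
  simp [GG, hk.1 1 0, hk.1 2 0, hk.1 3 0, hk.1 2 1, hk.1 3 1, hk.1 3 2] at e
  have ee : 48 * (cS 0 * (cS 0 * (cS 0 * DD 0 (k 0 0)))) + 18 * (cS 2 * (cS 2 * k 0 1)) + 18 * (cS 3 * (cS 3 * k 0 1)) - 18 * (cS 0 * (cS 2 * k 0 2)) - 18 * (cS 0 * (cS 3 * k 0 3)) = 0 := by
    linear_combination 16 * cS 0 ^ 3 * e + 6 * k 0 1 * huu + 6 * cS 0 * k 0 2 * hyu 2 (by decide) + 6 * cS 0 * k 0 3 * hyu 3 (by decide)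
  have h := congrArg (tau a b c d) ee
  simp only [map_add, map_sub, map_zero, tau_num, tau_u, tau_y, tau_z, tau_D0, tau_D1, tau_D2,
    tau_D3, sub_add_cancel] at h
  push_cast at h
  linear_combination h

lemma rec001 {k : Fin 4 → Fin 4 → SU} (hk : KT k) (a b c d : ℤ) :
    32 * ((a + 1) * tau (a + 1) b c d (k 0 1) + 3 * a * tau a b c d (k 0 1) + 3 * (a - 1) * tau (a - 1) b c d (k 0 1) + (a - 2) * tau (a - 1 - 1) b c d (k 0 1))
      + 16 * ((b + 1) * tau a (b + 1) c d (k 0 0) + 3 * (b + 1) * tau (a - 1) (b + 1) c d (k 0 0) + 3 * (b + 1) * tau (a - 1 - 1) (b + 1) c d (k 0 0) + (b + 1) * tau (a - 1 - 1 - 1) (b + 1) c d (k 0 0))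
      + 6 * (tau a b (c - 1 - 1) d (k 1 1) + tau a b c (d - 1 - 1) (k 1 1))
      - 6 * (tau a b (c - 1) d (k 1 2) + tau (a - 1) b (c - 1) d (k 1 2))
      - 6 * (tau a b c (d - 1) (k 1 3) + tau (a - 1) b c (d - 1) (k 1 3)) = 0 := by
  have e := hk.2 0 0 1
  simp only [cov2_expand] at e
  simp [GG, hk.1 1 0, hk.1 2 0, hk.1 3 0, hk.1 2 1, hk.1 3 1, hk.1 3 2] at e
  have ee : 32 * (cS 0 * (cS 0 * (cS 0 * DD 0 (k 0 1)))) + 16 * (cS 0 * (cS 0 * (cS 0 * DD 1 (k 0 0)))) + 6 * (cS 2 * (cS 2 * k 1 1)) + 6 * (cS 3 * (cS 3 * k 1 1)) - 6 * (cS 0 * (cS 2 * k 1 2)) - 6 * (cS 0 * (cS 3 * k 1 3)) = 0 := by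
    linear_combination 16 * cS 0 ^ 3 * e + 2 * k 1 1 * huu + 2 * cS 0 * k 1 2 * hyu 2 (by decide) + 2 * cS 0 * k 1 3 * hyu 3 (by decide)
  have h := congrArg (tau a b c d) ee
  simp only [map_add, map_sub, map_zero, tau_num, tau_u, tau_y, tau_z, tau_D0, tau_D1, tau_D2,
    tau_D3, sub_add_cancel] at h
  push_cast at h
  linear_combination h

lemma rec002 {k : Fin 4 → Fin 4 → SU} (hk : KT k) (a b c d : ℤ) :
    32 * ((a + 1) * tau (a + 1) b c d (k 0 2) + 3 * a * tau a b c d (k 0 2) + 3 * (a - 1) * tau (a - 1) b c d (k 0 2) + (a - 2) * tau (a - 1 - 1) b c d (k 0 2))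
      + 16 * ((c + 1) * tau a b (c + 1) d (k 0 0) + 3 * (c + 1) * tau (a - 1) b (c + 1) d (k 0 0) + 3 * (c + 1) * tau (a - 1 - 1) b (c + 1) d (k 0 0) + (c + 1) * tau (a - 1 - 1 - 1) b (c + 1) d (k 0 0))
      + 6 * (tau a b (c - 1 - 1) d (k 1 2) + tau a b c (d - 1 - 1) (k 1 2))
      - 6 * (tau a b (c - 1) d (k 2 2) + tau (a - 1) b (c - 1) d (k 2 2))
      - 6 * (tau a b c (d - 1) (k 2 3) + tau (a - 1) b c (d - 1) (k 2 3))
      - 12 * (tau a b (c - 1) d (k 0 1) + tau (a - 1) b (c - 1) d (k 0 1)) = 0 := by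
  have e := hk.2 0 0 2
  simp only [cov2_expand] at e
  simp [GG, hk.1 1 0, hk.1 2 0, hk.1 3 0, hk.1 2 1, hk.1 3 1, hk.1 3 2] at e
  have ee : 32 * (cS 0 * (cS 0 * (cS 0 * DD 0 (k 0 2)))) + 16 * (cS 0 * (cS 0 * (cS 0 * DD 2 (k 0 0)))) + 6 * (cS 2 * (cS 2 * k 1 2)) + 6 * (cS 3 * (cS 3 * k 1 2)) - 6 * (cS 0 * (cS 2 * k 2 2)) - 6 * (cS 0 * (cS 3 * k 2 3)) - 12 * (cS 0 * (cS 2 * k 0 1)) = 0 := by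
    linear_combination 16 * cS 0 ^ 3 * e + 2 * k 1 2 * huu + 2 * cS 0 * k 2 2 * hyu 2 (by decide) + 2 * cS 0 * k 2 3 * hyu 3 (by decide) + 4 * cS 0 * k 0 1 * hyu 2 (by decide)
  have h := congrArg (tau a b c d) ee
  simp only [map_add, map_sub, map_zero, tau_num, tau_u, tau_y, tau_z, tau_D0, tau_D1, tau_D2,
    tau_D3, sub_add_cancel] at h
  push_cast at h
  linear_combination h

lemma rec003 {k : Fin 4 → Fin 4 → SU} (hk : KT k) (a b c d : ℤ) :
    32 * ((a + 1) * tau (a + 1) b c d (k 0 3) + 3 * a * tau a b c d (k 0 3) + 3 * (a - 1) * tau (a - 1) b c d (k 0 3) + (a - 2) * tau (a - 1 - 1) b c d (k 0 3))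
      + 16 * ((d + 1) * tau a b c (d + 1) (k 0 0) + 3 * (d + 1) * tau (a - 1) b c (d + 1) (k 0 0) + 3 * (d + 1) * tau (a - 1 - 1) b c (d + 1) (k 0 0) + (d + 1) * tau (a - 1 - 1 - 1) b c (d + 1) (k 0 0))
      + 6 * (tau a b (c - 1 - 1) d (k 1 3) + tau a b c (d - 1 - 1) (k 1 3))
      - 6 * (tau a b (c - 1) d (k 2 3) + tau (a - 1) b (c - 1) d (k 2 3))
      - 6 * (tau a b c (d - 1) (k 3 3) + tau (a - 1) b c (d - 1) (k 3 3))
      - 12 * (tau a b c (d - 1) (k 0 1) + tau (a - 1) b c (d - 1) (k 0 1)) = 0 := by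
  have e := hk.2 0 0 3
  simp only [cov2_expand] at e
  simp [GG, hk.1 1 0, hk.1 2 0, hk.1 3 0, hk.1 2 1, hk.1 3 1, hk.1 3 2] at e
  have ee : 32 * (cS 0 * (cS 0 * (cS 0 * DD 0 (k 0 3)))) + 16 * (cS 0 * (cS 0 * (cS 0 * DD 3 (k 0 0)))) + 6 * (cS 2 * (cS 2 * k 1 3)) + 6 * (cS 3 * (cS 3 * k 1 3)) - 6 * (cS 0 * (cS 2 * k 2 3)) - 6 * (cS 0 * (cS 3 * k 3 3)) - 12 * (cS 0 * (cS 3 * k 0 1)) = 0 := by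
    linear_combination 16 * cS 0 ^ 3 * e + 2 * k 1 3 * huu + 2 * cS 0 * k 2 3 * hyu 2 (by decide) + 2 * cS 0 * k 3 3 * hyu 3 (by decide) + 4 * cS 0 * k 0 1 * hyu 3 (by decide)
  have h := congrArg (tau a b c d) ee
  simp only [map_add, map_sub, map_zero, tau_num, tau_u, tau_y, tau_z, tau_D0, tau_D1, tau_D2,
    tau_D3, sub_add_cancel] at h
  push_cast at h
  linear_combination h

lemma rec011 {k : Fin 4 → Fin 4 → SU} (hk : KT k) (a b c d : ℤ) :
    ((a + 1) * tau (a + 1) b c d (k 1 1))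
      + 2 * ((b + 1) * tau a (b + 1) c d (k 0 1)) = 0 := by
  have e := hk.2 0 1 1
  simp only [cov2_expand] at e
  simp [GG, hk.1 1 0, hk.1 2 0, hk.1 3 0, hk.1 2 1, hk.1 3 1, hk.1 3 2] at e
  have ee : DD 0 (k 1 1) + 2 * DD 1 (k 0 1) = 0 := by
    linear_combination e
  have h := congrArg (tau a b c d) ee
  simp only [map_add, map_sub, map_zero, tau_num, tau_u, tau_y, tau_z, tau_D0, tau_D1, tau_D2,
    tau_D3, sub_add_cancel] at h
  push_cast at h
  linear_combination h

lemma rec012 {k : Fin 4 → Fin 4 → SU} (hk : KT k) (a b c d : ℤ) :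
    16 * ((a + 1) * tau (a + 1) b c d (k 1 2) + 2 * a * tau a b c d (k 1 2) + (a - 1) * tau (a - 1) b c d (k 1 2))
      + 16 * ((b + 1) * tau a (b + 1) c d (k 0 2) + 2 * (b + 1) * tau (a - 1) (b + 1) c d (k 0 2) + (b + 1) * tau (a - 1 - 1) (b + 1) c d (k 0 2))
      + 16 * ((c + 1) * tau a b (c + 1) d (k 0 1) + 2 * (c + 1) * tau (a - 1) b (c + 1) d (k 0 1) + (c + 1) * tau (a - 1 - 1) b (c + 1) d (k 0 1))
      - 6 * (tau a b (c - 1) d (k 1 1)) = 0 := by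
  have e := hk.2 0 1 2
  simp only [cov2_expand] at e
  simp [GG, hk.1 1 0, hk.1 2 0, hk.1 3 0, hk.1 2 1, hk.1 3 1, hk.1 3 2] at e
  have ee : 16 * (cS 0 * (cS 0 * DD 0 (k 1 2))) + 16 * (cS 0 * (cS 0 * DD 1 (k 0 2))) + 16 * (cS 0 * (cS 0 * DD 2 (k 0 1))) - 6 * (cS 2 * k 1 1) = 0 := by
    linear_combination 16 * cS 0 ^ 2 * e + 2 * k 1 1 * hyu 2 (by decide)
  have h := congrArg (tau a b c d) ee
  simp only [map_add, map_sub, map_zero, tau_num, tau_u, tau_y, tau_z, tau_D0, tau_D1, tau_D2,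
    tau_D3, sub_add_cancel] at h
  push_cast at h
  linear_combination h

lemma rec013 {k : Fin 4 → Fin 4 → SU} (hk : KT k) (a b c d : ℤ) :
    16 * ((a + 1) * tau (a + 1) b c d (k 1 3) + 2 * a * tau a b c d (k 1 3) + (a - 1) * tau (a - 1) b c d (k 1 3))
      + 16 * ((b + 1) * tau a (b + 1) c d (k 0 3) + 2 * (b + 1) * tau (a - 1) (b + 1) c d (k 0 3) + (b + 1) * tau (a - 1 - 1) (b + 1) c d (k 0 3))
      + 16 * ((d + 1) * tau a b c (d + 1) (k 0 1) + 2 * (d + 1) * tau (a - 1) b c (d + 1) (k 0 1) + (d + 1) * tau (a - 1 - 1) b c (d + 1) (k 0 1))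
      - 6 * (tau a b c (d - 1) (k 1 1)) = 0 := by
  have e := hk.2 0 1 3
  simp only [cov2_expand] at e
  simp [GG, hk.1 1 0, hk.1 2 0, hk.1 3 0, hk.1 2 1, hk.1 3 1, hk.1 3 2] at e
  have ee : 16 * (cS 0 * (cS 0 * DD 0 (k 1 3))) + 16 * (cS 0 * (cS 0 * DD 1 (k 0 3))) + 16 * (cS 0 * (cS 0 * DD 3 (k 0 1))) - 6 * (cS 3 * k 1 1) = 0 := by
    linear_combination 16 * cS 0 ^ 2 * e + 2 * k 1 1 * hyu 3 (by decide)
  have h := congrArg (tau a b c d) ee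
  simp only [map_add, map_sub, map_zero, tau_num, tau_u, tau_y, tau_z, tau_D0, tau_D1, tau_D2,
    tau_D3, sub_add_cancel] at h
  push_cast at h
  linear_combination h

lemma rec022 {k : Fin 4 → Fin 4 → SU} (hk : KT k) (a b c d : ℤ) :
    16 * ((a + 1) * tau (a + 1) b c d (k 2 2) + 2 * a * tau a b c d (k 2 2) + (a - 1) * tau (a - 1) b c d (k 2 2))
      + 32 * ((c + 1) * tau a b (c + 1) d (k 0 2) + 2 * (c + 1) * tau (a - 1) b (c + 1) d (k 0 2) + (c + 1) * tau (a - 1 - 1) b (c + 1) d (k 0 2))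
      - 12 * (tau a b (c - 1) d (k 1 2)) = 0 := by
  have e := hk.2 0 2 2
  simp only [cov2_expand] at e
  simp [GG, hk.1 1 0, hk.1 2 0, hk.1 3 0, hk.1 2 1, hk.1 3 1, hk.1 3 2] at e
  have ee : 16 * (cS 0 * (cS 0 * DD 0 (k 2 2))) + 32 * (cS 0 * (cS 0 * DD 2 (k 0 2))) - 12 * (cS 2 * k 1 2) = 0 := by
    linear_combination 16 * cS 0 ^ 2 * e + 4 * k 1 2 * hyu 2 (by decide)
  have h := congrArg (tau a b c d) ee
  simp only [map_add, map_sub, map_zero, tau_num, tau_u, tau_y, tau_z, tau_D0, tau_D1, tau_D2,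
    tau_D3, sub_add_cancel] at h
  push_cast at h
  linear_combination h

lemma rec023 {k : Fin 4 → Fin 4 → SU} (hk : KT k) (a b c d : ℤ) :
    16 * ((a + 1) * tau (a + 1) b c d (k 2 3) + 2 * a * tau a b c d (k 2 3) + (a - 1) * tau (a - 1) b c d (k 2 3))
      + 16 * ((c + 1) * tau a b (c + 1) d (k 0 3) + 2 * (c + 1) * tau (a - 1) b (c + 1) d (k 0 3) + (c + 1) * tau (a - 1 - 1) b (c + 1) d (k 0 3))
      + 16 * ((d + 1) * tau a b c (d + 1) (k 0 2) + 2 * (d + 1) * tau (a - 1) b c (d + 1) (k 0 2) + (d + 1) * tau (a - 1 - 1) b c (d + 1) (k 0 2))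
      - 6 * (tau a b (c - 1) d (k 1 3))
      - 6 * (tau a b c (d - 1) (k 1 2)) = 0 := by
  have e := hk.2 0 2 3
  simp only [cov2_expand] at e
  simp [GG, hk.1 1 0, hk.1 2 0, hk.1 3 0, hk.1 2 1, hk.1 3 1, hk.1 3 2] at e
  have ee : 16 * (cS 0 * (cS 0 * DD 0 (k 2 3))) + 16 * (cS 0 * (cS 0 * DD 2 (k 0 3))) + 16 * (cS 0 * (cS 0 * DD 3 (k 0 2))) - 6 * (cS 2 * k 1 3) - 6 * (cS 3 * k 1 2) = 0 := by
    linear_combination 16 * cS 0 ^ 2 * e + 2 * k 1 3 * hyu 2 (by decide) + 2 * k 1 2 * hyu 3 (by decide)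
  have h := congrArg (tau a b c d) ee
  simp only [map_add, map_sub, map_zero, tau_num, tau_u, tau_y, tau_z, tau_D0, tau_D1, tau_D2,
    tau_D3, sub_add_cancel] at h
  push_cast at h
  linear_combination h

lemma rec033 {k : Fin 4 → Fin 4 → SU} (hk : KT k) (a b c d : ℤ) :
    16 * ((a + 1) * tau (a + 1) b c d (k 3 3) + 2 * a * tau a b c d (k 3 3) + (a - 1) * tau (a - 1) b c d (k 3 3))
      + 32 * ((d + 1) * tau a b c (d + 1) (k 0 3) + 2 * (d + 1) * tau (a - 1) b c (d + 1) (k 0 3) + (d + 1) * tau (a - 1 - 1) b c (d + 1) (k 0 3))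
      - 12 * (tau a b c (d - 1) (k 1 3)) = 0 := by
  have e := hk.2 0 3 3
  simp only [cov2_expand] at e
  simp [GG, hk.1 1 0, hk.1 2 0, hk.1 3 0, hk.1 2 1, hk.1 3 1, hk.1 3 2] at e
  have ee : 16 * (cS 0 * (cS 0 * DD 0 (k 3 3))) + 32 * (cS 0 * (cS 0 * DD 3 (k 0 3))) - 12 * (cS 3 * k 1 3) = 0 := by
    linear_combination 16 * cS 0 ^ 2 * e + 4 * k 1 3 * hyu 3 (by decide)
  have h := congrArg (tau a b c d) ee
  simp only [map_add, map_sub, map_zero, tau_num, tau_u, tau_y, tau_z, tau_D0, tau_D1, tau_D2,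
    tau_D3, sub_add_cancel] at h
  push_cast at h
  linear_combination h

lemma rec111 {k : Fin 4 → Fin 4 → SU} (hk : KT k) (a b c d : ℤ) :
    3 * ((b + 1) * tau a (b + 1) c d (k 1 1)) = 0 := by
  have e := hk.2 1 1 1
  simp only [cov2_expand] at e
  simp [GG, hk.1 1 0, hk.1 2 0, hk.1 3 0, hk.1 2 1, hk.1 3 1, hk.1 3 2] at e
  have ee : 3 * DD 1 (k 1 1) = 0 := by
    linear_combination e
  have h := congrArg (tau a b c d) ee
  simp only [map_add, map_sub, map_zero, tau_num, tau_u, tau_y, tau_z, tau_D0, tau_D1, tau_D2,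
    tau_D3, sub_add_cancel] at h
  push_cast at h
  linear_combination h

lemma rec112 {k : Fin 4 → Fin 4 → SU} (hk : KT k) (a b c d : ℤ) :
    2 * ((b + 1) * tau a (b + 1) c d (k 1 2))
      + ((c + 1) * tau a b (c + 1) d (k 1 1)) = 0 := by
  have e := hk.2 1 1 2
  simp only [cov2_expand] at e
  simp [GG, hk.1 1 0, hk.1 2 0, hk.1 3 0, hk.1 2 1, hk.1 3 1, hk.1 3 2] at e
  have ee : 2 * DD 1 (k 1 2) + DD 2 (k 1 1) = 0 := by
    linear_combination e
  have h := congrArg (tau a b c d) ee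
  simp only [map_add, map_sub, map_zero, tau_num, tau_u, tau_y, tau_z, tau_D0, tau_D1, tau_D2,
    tau_D3, sub_add_cancel] at h
  push_cast at h
  linear_combination h

lemma rec113 {k : Fin 4 → Fin 4 → SU} (hk : KT k) (a b c d : ℤ) :
    2 * ((b + 1) * tau a (b + 1) c d (k 1 3))
      + ((d + 1) * tau a b c (d + 1) (k 1 1)) = 0 := by
  have e := hk.2 1 1 3
  simp only [cov2_expand] at e
  simp [GG, hk.1 1 0, hk.1 2 0, hk.1 3 0, hk.1 2 1, hk.1 3 1, hk.1 3 2] at e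
  have ee : 2 * DD 1 (k 1 3) + DD 3 (k 1 1) = 0 := by
    linear_combination e
  have h := congrArg (tau a b c d) ee
  simp only [map_add, map_sub, map_zero, tau_num, tau_u, tau_y, tau_z, tau_D0, tau_D1, tau_D2,
    tau_D3, sub_add_cancel] at h
  push_cast at h
  linear_combination h

lemma rec122 {k : Fin 4 → Fin 4 → SU} (hk : KT k) (a b c d : ℤ) :
    ((b + 1) * tau a (b + 1) c d (k 2 2))
      + 2 * ((c + 1) * tau a b (c + 1) d (k 1 2)) = 0 := by
  have e := hk.2 1 2 2
  simp only [cov2_expand] at e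
  simp [GG, hk.1 1 0, hk.1 2 0, hk.1 3 0, hk.1 2 1, hk.1 3 1, hk.1 3 2] at e
  have ee : DD 1 (k 2 2) + 2 * DD 2 (k 1 2) = 0 := by
    linear_combination e
  have h := congrArg (tau a b c d) ee
  simp only [map_add, map_sub, map_zero, tau_num, tau_u, tau_y, tau_z, tau_D0, tau_D1, tau_D2,
    tau_D3, sub_add_cancel] at h
  push_cast at h
  linear_combination h

lemma rec123 {k : Fin 4 → Fin 4 → SU} (hk : KT k) (a b c d : ℤ) :
    ((b + 1) * tau a (b + 1) c d (k 2 3))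
      + ((c + 1) * tau a b (c + 1) d (k 1 3))
      + ((d + 1) * tau a b c (d + 1) (k 1 2)) = 0 := by
  have e := hk.2 1 2 3
  simp only [cov2_expand] at e
  simp [GG, hk.1 1 0, hk.1 2 0, hk.1 3 0, hk.1 2 1, hk.1 3 1, hk.1 3 2] at e
  have ee : DD 1 (k 2 3) + DD 2 (k 1 3) + DD 3 (k 1 2) = 0 := by
    linear_combination e
  have h := congrArg (tau a b c d) ee
  simp only [map_add, map_sub, map_zero, tau_num, tau_u, tau_y, tau_z, tau_D0, tau_D1, tau_D2,
    tau_D3, sub_add_cancel] at h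
  push_cast at h
  linear_combination h

lemma rec133 {k : Fin 4 → Fin 4 → SU} (hk : KT k) (a b c d : ℤ) :
    ((b + 1) * tau a (b + 1) c d (k 3 3))
      + 2 * ((d + 1) * tau a b c (d + 1) (k 1 3)) = 0 := by
  have e := hk.2 1 3 3
  simp only [cov2_expand] at e
  simp [GG, hk.1 1 0, hk.1 2 0, hk.1 3 0, hk.1 2 1, hk.1 3 1, hk.1 3 2] at e
  have ee : DD 1 (k 3 3) + 2 * DD 3 (k 1 3) = 0 := by
    linear_combination e
  have h := congrArg (tau a b c d) ee
  simp only [map_add, map_sub, map_zero, tau_num, tau_u, tau_y, tau_z, tau_D0, tau_D1, tau_D2,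
    tau_D3, sub_add_cancel] at h
  push_cast at h
  linear_combination h

lemma rec222 {k : Fin 4 → Fin 4 → SU} (hk : KT k) (a b c d : ℤ) :
    3 * ((c + 1) * tau a b (c + 1) d (k 2 2)) = 0 := by
  have e := hk.2 2 2 2
  simp only [cov2_expand] at e
  simp [GG, hk.1 1 0, hk.1 2 0, hk.1 3 0, hk.1 2 1, hk.1 3 1, hk.1 3 2] at e
  have ee : 3 * DD 2 (k 2 2) = 0 := by
    linear_combination e
  have h := congrArg (tau a b c d) ee
  simp only [map_add, map_sub, map_zero, tau_num, tau_u, tau_y, tau_z, tau_D0, tau_D1, tau_D2,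
    tau_D3, sub_add_cancel] at h
  push_cast at h
  linear_combination h

lemma rec223 {k : Fin 4 → Fin 4 → SU} (hk : KT k) (a b c d : ℤ) :
    2 * ((c + 1) * tau a b (c + 1) d (k 2 3))
      + ((d + 1) * tau a b c (d + 1) (k 2 2)) = 0 := by
  have e := hk.2 2 2 3
  simp only [cov2_expand] at e
  simp [GG, hk.1 1 0, hk.1 2 0, hk.1 3 0, hk.1 2 1, hk.1 3 1, hk.1 3 2] at e
  have ee : 2 * DD 2 (k 2 3) + DD 3 (k 2 2) = 0 := by
    linear_combination e
  have h := congrArg (tau a b c d) ee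
  simp only [map_add, map_sub, map_zero, tau_num, tau_u, tau_y, tau_z, tau_D0, tau_D1, tau_D2,
    tau_D3, sub_add_cancel] at h
  push_cast at h
  linear_combination h

lemma rec233 {k : Fin 4 → Fin 4 → SU} (hk : KT k) (a b c d : ℤ) :
    ((c + 1) * tau a b (c + 1) d (k 3 3))
      + 2 * ((d + 1) * tau a b c (d + 1) (k 2 3)) = 0 := by
  have e := hk.2 2 3 3
  simp only [cov2_expand] at e
  simp [GG, hk.1 1 0, hk.1 2 0, hk.1 3 0, hk.1 2 1, hk.1 3 1, hk.1 3 2] at e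
  have ee : DD 2 (k 3 3) + 2 * DD 3 (k 2 3) = 0 := by
    linear_combination e
  have h := congrArg (tau a b c d) ee
  simp only [map_add, map_sub, map_zero, tau_num, tau_u, tau_y, tau_z, tau_D0, tau_D1, tau_D2,
    tau_D3, sub_add_cancel] at h
  push_cast at h
  linear_combination h

lemma rec333 {k : Fin 4 → Fin 4 → SU} (hk : KT k) (a b c d : ℤ) :
    3 * ((d + 1) * tau a b c (d + 1) (k 3 3)) = 0 := by
  have e := hk.2 3 3 3
  simp only [cov2_expand] at e
  simp [GG, hk.1 1 0, hk.1 2 0, hk.1 3 0, hk.1 2 1, hk.1 3 1, hk.1 3 2] at e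
  have ee : 3 * DD 3 (k 3 3) = 0 := by
    linear_combination e
  have h := congrArg (tau a b c d) ee
  simp only [map_add, map_sub, map_zero, tau_num, tau_u, tau_y, tau_z, tau_D0, tau_D1, tau_D2,
    tau_D3, sub_add_cancel] at h
  push_cast at h
  linear_combination h
lemma secm400 {k : Fin 4 → Fin 4 → SU} (hk : KT k)
    (f0 : tau 0 0 0 0 (k 0 0) = 0) :
    tau 1 0 0 0 (k 0 0) = 0 ∧ tau 2 0 0 0 (k 0 0) = 0 := by
  have e0 := rec000 hk 1 0 0 0
  have e1 := rec000 hk 0 0 0 0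
  norm_num [tau_neg] at e0 e1
  refine ⟨?_, ?_⟩ <;> linarith

lemma secm301 {k : Fin 4 → Fin 4 → SU} (hk : KT k)
    (f0 : tau 0 0 0 1 (k 0 0) = 0) (f1 : tau 0 0 0 0 (k 0 3) = 0) :
    tau 1 0 0 1 (k 0 0) = 0 ∧ tau 1 0 0 0 (k 0 3) = 0 ∧ tau 2 0 0 0 (k 0 3) = 0 := by
  have e0 := rec003 hk 1 0 0 0
  have e1 := rec000 hk 0 0 0 1
  have e2 := rec003 hk 0 0 0 0
  norm_num [tau_neg] at e0 e1 e2
  refine ⟨?_, ?_, ?_⟩ <;> linarith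

lemma secm310 {k : Fin 4 → Fin 4 → SU} (hk : KT k)
    (f0 : tau 0 0 1 0 (k 0 0) = 0) (f1 : tau 0 0 0 0 (k 0 2) = 0) :
    tau 1 0 1 0 (k 0 0) = 0 ∧ tau 1 0 0 0 (k 0 2) = 0 ∧ tau 2 0 0 0 (k 0 2) = 0 := by
  have e0 := rec002 hk 1 0 0 0
  have e1 := rec000 hk 0 0 1 0
  have e2 := rec002 hk 0 0 0 0
  norm_num [tau_neg] at e0 e1 e2
  refine ⟨?_, ?_, ?_⟩ <;> linarith

lemma secm200 {k : Fin 4 → Fin 4 → SU} (hk : KT k)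
    (f0 : tau 0 0 0 2 (k 0 0) = 0) (f1 : tau 0 0 2 0 (k 0 0) = 0) (f2 : tau 0 1 0 0 (k 0 0) = 0)
    (f3 : tau 0 0 0 0 (k 0 1) = 0) (f4 : tau 0 0 1 0 (k 0 2) = 0) (f5 : tau 0 0 0 1 (k 0 3) = 0)
    (f6 : tau 0 0 0 0 (k 2 2) = 0) (f7 : tau 0 0 0 0 (k 3 3) = 0) :
    tau 1 1 0 0 (k 0 0) = 0 ∧ tau 1 0 0 0 (k 0 1) = 0 ∧ tau 2 0 0 0 (k 0 1) = 0 ∧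
    tau 1 0 1 0 (k 0 2) = 0 ∧ tau 1 0 0 1 (k 0 3) = 0 ∧ tau 1 0 0 0 (k 2 2) = 0 ∧
    tau 2 0 0 0 (k 2 2) = 0 ∧ tau 1 0 0 0 (k 3 3) = 0 ∧ tau 2 0 0 0 (k 3 3) = 0 := by
  have e0 := rec001 hk 1 0 0 0
  have e1 := rec002 hk 0 0 1 0
  have e2 := rec003 hk 0 0 0 1
  have e3 := rec022 hk 1 0 0 0
  have e4 := rec033 hk 1 0 0 0
  have e5 := rec000 hk 0 1 0 0
  have e6 := rec001 hk 0 0 0 0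
  have e7 := rec022 hk 0 0 0 0
  have e8 := rec033 hk 0 0 0 0
  norm_num [tau_neg] at e0 e1 e2 e3 e4 e5 e6 e7 e8
  refine ⟨?_, ?_, ?_, ?_, ?_, ?_, ?_, ?_, ?_⟩ <;> linarith

lemma secm211 {k : Fin 4 → Fin 4 → SU} (hk : KT k)
    (f0 : tau 0 0 1 1 (k 0 0) = 0) (f1 : tau 0 0 0 1 (k 0 2) = 0) (f2 : tau 0 0 1 0 (k 0 3) = 0)
    (f3 : tau 0 0 0 0 (k 2 3) = 0) :
    tau 1 0 0 1 (k 0 2) = 0 ∧ tau 1 0 1 0 (k 0 3) = 0 ∧ tau 1 0 0 0 (k 2 3) = 0 ∧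
    tau 2 0 0 0 (k 2 3) = 0 := by
  have e0 := rec023 hk 1 0 0 0
  have e1 := rec002 hk 0 0 0 1
  have e2 := rec003 hk 0 0 1 0
  have e3 := rec023 hk 0 0 0 0
  norm_num [tau_neg] at e0 e1 e2 e3
  refine ⟨?_, ?_, ?_, ?_⟩ <;> linarith

lemma secm101 {k : Fin 4 → Fin 4 → SU} (hk : KT k)
    (f0 : tau 0 0 0 1 (k 0 1) = 0) (f1 : tau 0 0 1 1 (k 0 2) = 0) (f2 : tau 0 1 0 0 (k 0 3) = 0)
    (f3 : tau 0 0 0 0 (k 1 3) = 0) (f4 : tau 0 0 0 1 (k 2 2) = 0) :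
    tau 0 1 0 1 (k 0 0) = 0 ∧ tau 1 0 0 1 (k 0 1) = 0 ∧ tau 0 0 0 2 (k 0 3) = 0 ∧
    tau 0 0 2 0 (k 0 3) = 0 ∧ tau 1 1 0 0 (k 0 3) = 0 ∧ tau 1 0 0 0 (k 1 3) = 0 ∧
    tau 2 0 0 0 (k 1 3) = 0 ∧ tau 1 0 0 1 (k 2 2) = 0 ∧ tau 0 0 1 0 (k 2 3) = 0 ∧
    tau 1 0 1 0 (k 2 3) = 0 ∧ tau 0 0 0 1 (k 3 3) = 0 ∧ tau 1 0 0 1 (k 3 3) = 0 := by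
  have e0 := rec002 hk 1 0 1 1
  have e1 := rec023 hk 2 0 1 0
  have e2 := rec003 hk 1 0 0 2
  have e3 := rec003 hk 1 0 2 0
  have e4 := rec033 hk 2 0 0 1
  have e5 := rec022 hk 2 0 0 1
  have e6 := rec000 hk 0 0 2 1
  have e7 := rec000 hk 0 0 0 3
  have e8 := rec223 hk 3 0 0 0
  have e9 := rec333 hk 3 0 0 0
  have e10 := rec023 hk 1 0 1 0
  have e11 := rec002 hk 0 0 1 1
  have e12 := rec003 hk 0 0 0 2
  have e13 := rec033 hk 1 0 0 1
  have e14 := rec003 hk 0 0 2 0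
  have e15 := rec022 hk 1 0 0 1
  have e16 := rec013 hk 1 0 0 0
  have e17 := rec023 hk 0 0 1 0
  have e18 := rec001 hk 0 0 0 1
  have e19 := rec033 hk 0 0 0 1
  have e20 := rec003 hk 0 1 0 0
  have e21 := rec022 hk 0 0 0 1
  have e22 := rec223 hk 1 0 0 0
  have e23 := rec333 hk 1 0 0 0
  have e24 := rec013 hk 0 0 0 0
  have e25 := rec223 hk 0 0 0 0
  norm_num [tau_neg] at e0 e1 e2 e3 e4 e5 e6 e7 e8 e9 e10 e11 e12 e13 e14 e15 e16 e17
  norm_num [tau_neg] at e18 e19 e20 e21 e22 e23 e24 e25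
  refine ⟨?_, ?_, ?_, ?_, ?_, ?_, ?_, ?_, ?_, ?_, ?_, ?_⟩ <;> linarith

lemma secm110 {k : Fin 4 → Fin 4 → SU} (hk : KT k)
    (f0 : tau 0 0 1 0 (k 0 1) = 0) (f1 : tau 0 0 0 2 (k 0 2) = 0) (f2 : tau 0 1 0 0 (k 0 2) = 0)
    (f3 : tau 0 0 0 0 (k 1 2) = 0) (f4 : tau 0 0 0 1 (k 2 3) = 0) :
    tau 0 1 1 0 (k 0 0) = 0 ∧ tau 1 0 1 0 (k 0 1) = 0 ∧ tau 0 0 2 0 (k 0 2) = 0 ∧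
    tau 1 1 0 0 (k 0 2) = 0 ∧ tau 0 0 1 1 (k 0 3) = 0 ∧ tau 1 0 0 0 (k 1 2) = 0 ∧
    tau 2 0 0 0 (k 1 2) = 0 ∧ tau 0 0 1 0 (k 2 2) = 0 ∧ tau 1 0 1 0 (k 2 2) = 0 ∧
    tau 1 0 0 1 (k 2 3) = 0 ∧ tau 0 0 1 0 (k 3 3) = 0 ∧ tau 1 0 1 0 (k 3 3) = 0 := by
  have e0 := rec003 hk 1 0 1 1
  have e1 := rec023 hk 2 0 0 1
  have e2 := rec002 hk 1 0 2 0
  have e3 := rec002 hk 1 0 0 2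
  have e4 := rec022 hk 2 0 1 0
  have e5 := rec033 hk 2 0 1 0
  have e6 := rec000 hk 0 0 1 2
  have e7 := rec000 hk 0 0 3 0
  have e8 := rec233 hk 3 0 0 0
  have e9 := rec222 hk 3 0 0 0
  have e10 := rec023 hk 1 0 0 1
  have e11 := rec002 hk 0 0 2 0
  have e12 := rec003 hk 0 0 1 1
  have e13 := rec022 hk 1 0 1 0
  have e14 := rec002 hk 0 0 0 2
  have e15 := rec033 hk 1 0 1 0
  have e16 := rec012 hk 1 0 0 0
  have e17 := rec023 hk 0 0 0 1
  have e18 := rec001 hk 0 0 1 0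
  have e19 := rec022 hk 0 0 1 0
  have e20 := rec002 hk 0 1 0 0
  have e21 := rec033 hk 0 0 1 0
  have e22 := rec233 hk 1 0 0 0
  have e23 := rec222 hk 1 0 0 0
  have e24 := rec012 hk 0 0 0 0
  have e25 := rec233 hk 0 0 0 0
  norm_num [tau_neg] at e0 e1 e2 e3 e4 e5 e6 e7 e8 e9 e10 e11 e12 e13 e14 e15 e16 e17
  norm_num [tau_neg] at e18 e19 e20 e21 e22 e23 e24 e25
  refine ⟨?_, ?_, ?_, ?_, ?_, ?_, ?_, ?_, ?_, ?_, ?_, ?_⟩ <;> linarith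

set_option maxHeartbeats 2000000 in
lemma sec000 {k : Fin 4 → Fin 4 → SU} (hk : KT k)
    (f0 : tau 0 1 0 0 (k 0 1) = 0) (f1 : tau 0 0 0 0 (k 1 1) = 0) (f2 : tau 0 0 1 0 (k 1 2) = 0)
    (f3 : tau 0 0 0 1 (k 1 3) = 0) (f4 : tau 0 0 0 2 (k 2 2) = 0) :
    tau 0 2 0 0 (k 0 0) = 0 ∧ tau 0 0 0 2 (k 0 1) = 0 ∧ tau 0 0 2 0 (k 0 1) = 0 ∧
    tau 1 1 0 0 (k 0 1) = 0 ∧ tau 0 1 1 0 (k 0 2) = 0 ∧ tau 0 1 0 1 (k 0 3) = 0 ∧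
    tau 1 0 0 0 (k 1 1) = 0 ∧ tau 2 0 0 0 (k 1 1) = 0 ∧ tau 1 0 1 0 (k 1 2) = 0 ∧
    tau 1 0 0 1 (k 1 3) = 0 ∧ tau 0 0 2 0 (k 2 2) = 0 ∧ tau 0 1 0 0 (k 2 2) = 0 ∧
    tau 1 1 0 0 (k 2 2) = 0 ∧ tau 0 0 1 1 (k 2 3) = 0 ∧ tau 0 0 0 2 (k 3 3) = 0 ∧
    tau 0 0 2 0 (k 3 3) = 0 ∧ tau 0 1 0 0 (k 3 3) = 0 ∧ tau 1 1 0 0 (k 3 3) = 0 := by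
  have e0 := rec003 hk 1 0 0 3
  have e1 := rec033 hk 2 0 0 2
  have e2 := rec000 hk 0 0 0 4
  have e3 := rec333 hk 3 0 0 1
  have e4 := rec013 hk 2 0 0 1
  have e5 := rec003 hk 1 1 0 1
  have e6 := rec001 hk 1 0 0 2
  have e7 := rec002 hk 0 0 1 2
  have e8 := rec003 hk 0 0 2 1
  have e9 := rec033 hk 2 1 0 0
  have e10 := rec003 hk 0 0 0 3
  have e11 := rec033 hk 1 0 0 2
  have e12 := rec022 hk 1 0 0 2
  have e13 := rec033 hk 1 0 2 0
  have e14 := rec000 hk 0 1 0 2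
  have e15 := rec133 hk 3 0 0 0
  have e16 := rec223 hk 2 0 0 1
  have e17 := rec233 hk 2 0 1 0
  have e18 := rec013 hk 1 0 0 1
  have e19 := rec001 hk 0 0 0 2
  have e20 := rec003 hk 0 1 0 1
  have e21 := rec033 hk 1 1 0 0
  have e22 := rec033 hk 0 0 0 2
  have e23 := rec022 hk 0 0 0 2
  have e24 := rec033 hk 0 0 2 0
  have e25 := rec133 hk 2 0 0 0
  have e26 := rec333 hk 1 0 0 1
  have e27 := rec012 hk 0 0 1 0
  have e28 := rec013 hk 0 0 0 1
  have e29 := rec001 hk 0 1 0 0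
  have e30 := rec011 hk 1 0 0 0
  have e31 := rec022 hk 0 1 0 0
  have e32 := rec033 hk 0 1 0 0
  have e33 := rec122 hk 1 0 0 0
  have e34 := rec133 hk 1 0 0 0
  have e35 := rec223 hk 0 0 0 1
  have e36 := rec233 hk 0 0 1 0
  have e37 := rec222 hk 0 0 1 0
  have e38 := rec333 hk 0 0 0 1
  have e39 := rec011 hk 0 0 0 0
  have e40 := rec122 hk 0 0 0 0
  have e41 := rec133 hk 0 0 0 0
  norm_num [tau_neg] at e0 e1 e2 e3 e4 e5 e6 e7 e8 e9 e10 e11 e12 e13 e14 e15 e16 e17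
  norm_num [tau_neg] at e18 e19 e20 e21 e22 e23 e24 e25 e26 e27 e28 e29 e30 e31 e32 e33 e34 e35
  norm_num [tau_neg] at e36 e37 e38 e39 e40 e41
  refine ⟨?_, ?_, ?_, ?_, ?_, ?_, ?_, ?_, ?_, ?_, ?_, ?_, ?_, ?_, ?_, ?_, ?_, ?_⟩ <;> linarith

lemma sec011 {k : Fin 4 → Fin 4 → SU} (hk : KT k)
    (f0 : tau 0 0 0 1 (k 1 2) = 0) (f1 : tau 0 0 1 0 (k 1 3) = 0) :
    tau 0 0 1 1 (k 0 1) = 0 ∧ tau 0 1 0 1 (k 0 2) = 0 ∧ tau 0 1 1 0 (k 0 3) = 0 ∧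
    tau 1 0 0 1 (k 1 2) = 0 ∧ tau 1 0 1 0 (k 1 3) = 0 ∧ tau 0 0 1 1 (k 2 2) = 0 ∧
    tau 0 0 0 2 (k 2 3) = 0 ∧ tau 0 0 2 0 (k 2 3) = 0 ∧ tau 0 1 0 0 (k 2 3) = 0 ∧
    tau 1 1 0 0 (k 2 3) = 0 ∧ tau 0 0 1 1 (k 3 3) = 0 := by
  have e0 := rec023 hk 1 0 0 2
  have e1 := rec023 hk 1 0 2 0
  have e2 := rec002 hk 0 0 2 1
  have e3 := rec003 hk 0 0 1 2
  have e4 := rec022 hk 1 0 1 1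
  have e5 := rec033 hk 1 0 1 1
  have e6 := rec002 hk 0 0 0 3
  have e7 := rec003 hk 0 0 3 0
  have e8 := rec223 hk 2 0 1 0
  have e9 := rec233 hk 2 0 0 1
  have e10 := rec222 hk 2 0 0 1
  have e11 := rec333 hk 2 0 1 0
  have e12 := rec023 hk 0 0 0 2
  have e13 := rec023 hk 0 0 2 0
  have e14 := rec022 hk 0 0 1 1
  have e15 := rec033 hk 0 0 1 1
  have e16 := rec012 hk 0 0 0 1
  have e17 := rec013 hk 0 0 1 0
  have e18 := rec023 hk 0 1 0 0
  have e19 := rec123 hk 1 0 0 0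
  have e20 := rec223 hk 0 0 1 0
  have e21 := rec233 hk 0 0 0 1
  have e22 := rec222 hk 0 0 0 1
  have e23 := rec333 hk 0 0 1 0
  have e24 := rec123 hk 0 0 0 0
  norm_num [tau_neg] at e0 e1 e2 e3 e4 e5 e6 e7 e8 e9 e10 e11 e12 e13 e14 e15 e16 e17
  norm_num [tau_neg] at e18 e19 e20 e21 e22 e23 e24
  refine ⟨?_, ?_, ?_, ?_, ?_, ?_, ?_, ?_, ?_, ?_, ?_⟩ <;> linarith

lemma sec101 {k : Fin 4 → Fin 4 → SU} (hk : KT k) :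
    tau 0 1 0 1 (k 0 1) = 0 ∧ tau 0 2 0 0 (k 0 3) = 0 ∧ tau 0 0 0 1 (k 1 1) = 0 ∧
    tau 1 0 0 1 (k 1 1) = 0 ∧ tau 0 0 1 1 (k 1 2) = 0 ∧ tau 0 0 0 2 (k 1 3) = 0 ∧
    tau 0 0 2 0 (k 1 3) = 0 ∧ tau 0 1 0 0 (k 1 3) = 0 ∧ tau 1 1 0 0 (k 1 3) = 0 ∧
    tau 0 1 0 1 (k 2 2) = 0 ∧ tau 0 1 1 0 (k 2 3) = 0 ∧ tau 0 1 0 1 (k 3 3) = 0 := by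
  have e0 := rec013 hk 2 1 0 0
  have e1 := rec012 hk 1 0 1 1
  have e2 := rec013 hk 1 0 0 2
  have e3 := rec023 hk 1 1 1 0
  have e4 := rec001 hk 1 1 0 1
  have e5 := rec001 hk 0 0 2 1
  have e6 := rec003 hk 0 1 0 2
  have e7 := rec023 hk 0 0 1 2
  have e8 := rec033 hk 1 1 0 1
  have e9 := rec001 hk 0 0 0 3
  have e10 := rec003 hk 0 1 2 0
  have e11 := rec003 hk 1 2 0 0
  have e12 := rec033 hk 0 0 2 1
  have e13 := rec000 hk 0 2 0 1
  have e14 := rec011 hk 2 0 0 1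
  have e15 := rec022 hk 0 0 0 3
  have e16 := rec113 hk 3 0 0 0
  have e17 := rec122 hk 2 0 0 1
  have e18 := rec133 hk 2 0 0 1
  have e19 := rec223 hk 1 0 0 2
  have e20 := rec223 hk 2 1 0 0
  have e21 := rec233 hk 1 0 1 1
  have e22 := rec333 hk 1 0 2 0
  have e23 := rec333 hk 2 1 0 0
  have e24 := rec013 hk 1 1 0 0
  have e25 := rec012 hk 0 0 1 1
  have e26 := rec013 hk 0 0 0 2
  have e27 := rec023 hk 0 1 1 0
  have e28 := rec001 hk 0 1 0 1
  have e29 := rec033 hk 0 1 0 1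
  have e30 := rec003 hk 0 2 0 0
  have e31 := rec013 hk 0 1 0 0
  have e32 := rec123 hk 0 0 1 0
  have e33 := rec011 hk 0 0 0 1
  have e34 := rec113 hk 1 0 0 0
  have e35 := rec122 hk 0 0 0 1
  have e36 := rec133 hk 0 0 0 1
  have e37 := rec223 hk 0 1 0 0
  have e38 := rec333 hk 0 1 0 0
  norm_num [tau_neg] at e0 e1 e2 e3 e4 e5 e6 e7 e8 e9 e10 e11 e12 e13 e14 e15 e16 e17
  norm_num [tau_neg] at e18 e19 e20 e21 e22 e23 e24 e25 e26 e27 e28 e29 e30 e31 e32 e33 e34 e35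
  norm_num [tau_neg] at e36 e37 e38
  refine ⟨?_, ?_, ?_, ?_, ?_, ?_, ?_, ?_, ?_, ?_, ?_, ?_⟩ <;> linarith

lemma sec110 {k : Fin 4 → Fin 4 → SU} (hk : KT k) :
    tau 0 1 1 0 (k 0 1) = 0 ∧ tau 0 2 0 0 (k 0 2) = 0 ∧ tau 0 0 1 0 (k 1 1) = 0 ∧
    tau 1 0 1 0 (k 1 1) = 0 ∧ tau 0 0 0 2 (k 1 2) = 0 ∧ tau 0 0 2 0 (k 1 2) = 0 ∧
    tau 0 1 0 0 (k 1 2) = 0 ∧ tau 1 1 0 0 (k 1 2) = 0 ∧ tau 0 0 1 1 (k 1 3) = 0 ∧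
    tau 0 1 1 0 (k 2 2) = 0 ∧ tau 0 1 0 1 (k 2 3) = 0 ∧ tau 0 1 1 0 (k 3 3) = 0 := by
  have e0 := rec012 hk 2 1 0 0
  have e1 := rec012 hk 1 0 2 0
  have e2 := rec013 hk 1 0 1 1
  have e3 := rec023 hk 1 1 0 1
  have e4 := rec001 hk 1 1 1 0
  have e5 := rec001 hk 0 0 1 2
  have e6 := rec002 hk 0 1 2 0
  have e7 := rec022 hk 1 1 1 0
  have e8 := rec023 hk 0 0 2 1
  have e9 := rec001 hk 0 0 3 0
  have e10 := rec002 hk 0 1 0 2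
  have e11 := rec002 hk 1 2 0 0
  have e12 := rec022 hk 0 0 1 2
  have e13 := rec000 hk 0 2 1 0
  have e14 := rec011 hk 2 0 1 0
  have e15 := rec033 hk 0 0 3 0
  have e16 := rec112 hk 3 0 0 0
  have e17 := rec122 hk 2 0 1 0
  have e18 := rec133 hk 2 0 1 0
  have e19 := rec223 hk 1 0 1 1
  have e20 := rec233 hk 1 0 2 0
  have e21 := rec233 hk 2 1 0 0
  have e22 := rec222 hk 1 0 0 2
  have e23 := rec222 hk 2 1 0 0
  have e24 := rec012 hk 1 1 0 0
  have e25 := rec012 hk 0 0 2 0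
  have e26 := rec013 hk 0 0 1 1
  have e27 := rec023 hk 0 1 0 1
  have e28 := rec001 hk 0 1 1 0
  have e29 := rec022 hk 0 1 1 0
  have e30 := rec002 hk 0 2 0 0
  have e31 := rec012 hk 0 1 0 0
  have e32 := rec123 hk 0 0 0 1
  have e33 := rec011 hk 0 0 1 0
  have e34 := rec112 hk 1 0 0 0
  have e35 := rec122 hk 0 0 1 0
  have e36 := rec133 hk 0 0 1 0
  have e37 := rec233 hk 0 1 0 0
  have e38 := rec222 hk 0 1 0 0
  norm_num [tau_neg] at e0 e1 e2 e3 e4 e5 e6 e7 e8 e9 e10 e11 e12 e13 e14 e15 e16 e17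
  norm_num [tau_neg] at e18 e19 e20 e21 e22 e23 e24 e25 e26 e27 e28 e29 e30 e31 e32 e33 e34 e35
  norm_num [tau_neg] at e36 e37 e38
  refine ⟨?_, ?_, ?_, ?_, ?_, ?_, ?_, ?_, ?_, ?_, ?_, ?_⟩ <;> linarith

lemma sec200 {k : Fin 4 → Fin 4 → SU} (hk : KT k) :
    tau 0 2 0 0 (k 0 1) = 0 ∧ tau 0 0 0 2 (k 1 1) = 0 ∧ tau 0 0 2 0 (k 1 1) = 0 ∧
    tau 0 1 0 0 (k 1 1) = 0 ∧ tau 1 1 0 0 (k 1 1) = 0 ∧ tau 0 1 1 0 (k 1 2) = 0 ∧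
    tau 0 1 0 1 (k 1 3) = 0 ∧ tau 0 2 0 0 (k 2 2) = 0 ∧ tau 0 2 0 0 (k 3 3) = 0 := by
  have e0 := rec023 hk 0 1 1 1
  have e1 := rec012 hk 0 0 1 2
  have e2 := rec013 hk 0 0 2 1
  have e3 := rec123 hk 1 0 1 1
  have e4 := rec022 hk 0 1 0 2
  have e5 := rec033 hk 0 1 2 0
  have e6 := rec122 hk 1 0 0 2
  have e7 := rec133 hk 1 0 2 0
  have e8 := rec223 hk 1 1 0 1
  have e9 := rec233 hk 1 1 1 0
  have e10 := rec011 hk 0 1 0 0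
  have e11 := rec112 hk 0 0 1 0
  have e12 := rec113 hk 0 0 0 1
  have e13 := rec122 hk 0 1 0 0
  have e14 := rec133 hk 0 1 0 0
  have e15 := rec111 hk 1 0 0 0
  have e16 := rec111 hk 0 0 0 0
  norm_num [tau_neg] at e0 e1 e2 e3 e4 e5 e6 e7 e8 e9 e10 e11 e12 e13 e14 e15 e16
  refine ⟨?_, ?_, ?_, ?_, ?_, ?_, ?_, ?_, ?_⟩ <;> linarith

lemma sec211 {k : Fin 4 → Fin 4 → SU} (hk : KT k) :
    tau 0 0 1 1 (k 1 1) = 0 ∧ tau 0 1 0 1 (k 1 2) = 0 ∧ tau 0 1 1 0 (k 1 3) = 0 ∧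
    tau 0 2 0 0 (k 2 3) = 0 := by
  have e0 := rec023 hk 1 2 0 0
  have e1 := rec001 hk 0 1 1 1
  have e2 := rec002 hk 0 2 0 1
  have e3 := rec003 hk 0 2 1 0
  have e4 := rec123 hk 2 1 0 0
  have e5 := rec011 hk 1 0 1 1
  have e6 := rec112 hk 2 0 0 1
  have e7 := rec113 hk 2 0 1 0
  have e8 := rec023 hk 0 2 0 0
  have e9 := rec123 hk 0 1 0 0
  have e10 := rec112 hk 0 0 0 1
  have e11 := rec113 hk 0 0 1 0
  norm_num [tau_neg] at e0 e1 e2 e3 e4 e5 e6 e7 e8 e9 e10 e11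
  refine ⟨?_, ?_, ?_, ?_⟩ <;> linarith

lemma sec301 {k : Fin 4 → Fin 4 → SU} (hk : KT k) :
    tau 0 1 0 1 (k 1 1) = 0 ∧ tau 0 2 0 0 (k 1 3) = 0 := by
  have e0 := rec113 hk 0 1 0 0
  have e1 := rec111 hk 0 0 0 1
  norm_num [tau_neg] at e0 e1
  refine ⟨?_, ?_⟩ <;> linarith

lemma sec310 {k : Fin 4 → Fin 4 → SU} (hk : KT k) :
    tau 0 1 1 0 (k 1 1) = 0 ∧ tau 0 2 0 0 (k 1 2) = 0 := by
  have e0 := rec112 hk 0 1 0 0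
  have e1 := rec111 hk 0 0 1 0
  norm_num [tau_neg] at e0 e1
  refine ⟨?_, ?_⟩ <;> linarith

lemma sec400 {k : Fin 4 → Fin 4 → SU} (hk : KT k) :
    tau 0 2 0 0 (k 1 1) = 0 := by
  have e0 := rec111 hk 0 1 0 0
  norm_num [tau_neg] at e0
  linarith

/-! ## Killing tensors and vectors are determined by finitely many Taylor coefficients -/

lemma evS_tau (f : SU) : evS pbase f = tau 0 0 0 0 f := by
  simp [tau_def, tay]

/-- The Taylor coefficients of order at most two vanish. -/
def J2 (f : SU) : Prop :=
  tau 0 0 0 0 f = 0 ∧ tau 1 0 0 0 f = 0 ∧ tau 0 1 0 0 f = 0 ∧ tau 0 0 1 0 f = 0 ∧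
  tau 0 0 0 1 f = 0 ∧ tau 2 0 0 0 f = 0 ∧ tau 1 1 0 0 f = 0 ∧ tau 1 0 1 0 f = 0 ∧
  tau 1 0 0 1 f = 0 ∧ tau 0 2 0 0 f = 0 ∧ tau 0 1 1 0 f = 0 ∧ tau 0 1 0 1 f = 0 ∧
  tau 0 0 2 0 f = 0 ∧ tau 0 0 1 1 f = 0 ∧ tau 0 0 0 2 f = 0

lemma J2_jets {f : SU} (h : J2 f) : evS pbase f = 0 ∧ (∀ i, evS pbase (DD i f) = 0) ∧
    (∀ i j, evS pbase (DD i (DD j f)) = 0) := by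
  obtain ⟨h1, h2, h3, h4, h5, h6, h7, h8, h9, h10, h11, h12, h13, h14, h15⟩ := h
  refine ⟨by rw [evS_tau, h1], fun i => ?_, fun i j => ?_⟩
  · rw [evS_tau]
    fin_cases i <;> simp [tau_D0, tau_D1, tau_D2, tau_D3, *]
  · rw [evS_tau]
    fin_cases i <;> fin_cases j <;> simp [tau_D0, tau_D1, tau_D2, tau_D3, *]

/-- The coordinates on the space of Killing tensors. -/
def frT (i : Fin 34) : (Fin 4 → Fin 4 → SU) →ₗ[ℝ] ℝ :=
  let q : ℤ × ℤ × ℤ × ℤ × Fin 4 × Fin 4 := (![(0, 0, 0, 0, 0, 0), (0, 0, 0, 1, 0, 0), (0, 0, 0, 0, 0, 3), (0, 0, 1, 0, 0, 0),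
    (0, 0, 0, 0, 0, 2), (0, 0, 0, 2, 0, 0), (0, 0, 2, 0, 0, 0), (0, 1, 0, 0, 0, 0),
    (0, 0, 0, 0, 0, 1), (0, 0, 1, 0, 0, 2), (0, 0, 0, 1, 0, 3), (0, 0, 0, 0, 2, 2),
    (0, 0, 0, 0, 3, 3), (0, 0, 1, 1, 0, 0), (0, 0, 0, 1, 0, 2), (0, 0, 1, 0, 0, 3),
    (0, 0, 0, 0, 2, 3), (0, 0, 0, 1, 0, 1), (0, 0, 1, 1, 0, 2), (0, 1, 0, 0, 0, 3),
    (0, 0, 0, 0, 1, 3), (0, 0, 0, 1, 2, 2), (0, 0, 1, 0, 0, 1), (0, 0, 0, 2, 0, 2),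
    (0, 1, 0, 0, 0, 2), (0, 0, 0, 0, 1, 2), (0, 0, 0, 1, 2, 3), (0, 1, 0, 0, 0, 1),
    (0, 0, 0, 0, 1, 1), (0, 0, 1, 0, 1, 2), (0, 0, 0, 1, 1, 3), (0, 0, 0, 2, 2, 2),
    (0, 0, 0, 1, 1, 2), (0, 0, 1, 0, 1, 3)] : Fin 34 → ℤ × ℤ × ℤ × ℤ × Fin 4 × Fin 4) i
  tau q.1 q.2.1 q.2.2.1 q.2.2.2.1 ∘ₗ LinearMap.proj q.2.2.2.2.2 ∘ₗ LinearMap.proj q.2.2.2.2.1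

set_option maxHeartbeats 1000000 in
lemma KT_zero {k : Fin 4 → Fin 4 → SU} (hk : KT k) (h : ∀ i, frT i k = 0) : ∀ a b, k a b = 0 := by
  have h0 : tau 0 0 0 0 (k 0 0) = 0 := h 0
  obtain ⟨s0_0, s0_1⟩ := secm400 hk h0
  have h1 : tau 0 0 0 1 (k 0 0) = 0 := h 1
  have h2 : tau 0 0 0 0 (k 0 3) = 0 := h 2
  obtain ⟨s1_0, s1_1, s1_2⟩ := secm301 hk h1 h2
  have h3 : tau 0 0 1 0 (k 0 0) = 0 := h 3
  have h4 : tau 0 0 0 0 (k 0 2) = 0 := h 4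
  obtain ⟨s2_0, s2_1, s2_2⟩ := secm310 hk h3 h4
  have h5 : tau 0 0 0 2 (k 0 0) = 0 := h 5
  have h6 : tau 0 0 2 0 (k 0 0) = 0 := h 6
  have h7 : tau 0 1 0 0 (k 0 0) = 0 := h 7
  have h8 : tau 0 0 0 0 (k 0 1) = 0 := h 8
  have h9 : tau 0 0 1 0 (k 0 2) = 0 := h 9
  have h10 : tau 0 0 0 1 (k 0 3) = 0 := h 10
  have h11 : tau 0 0 0 0 (k 2 2) = 0 := h 11
  have h12 : tau 0 0 0 0 (k 3 3) = 0 := h 12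
  obtain ⟨s3_0, s3_1, s3_2, s3_3, s3_4, s3_5, s3_6, s3_7, s3_8⟩ := secm200 hk h5 h6 h7 h8 h9 h10
    h11 h12
  have h13 : tau 0 0 1 1 (k 0 0) = 0 := h 13
  have h14 : tau 0 0 0 1 (k 0 2) = 0 := h 14
  have h15 : tau 0 0 1 0 (k 0 3) = 0 := h 15
  have h16 : tau 0 0 0 0 (k 2 3) = 0 := h 16
  obtain ⟨s4_0, s4_1, s4_2, s4_3⟩ := secm211 hk h13 h14 h15 h16
  have h17 : tau 0 0 0 1 (k 0 1) = 0 := h 17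
  have h18 : tau 0 0 1 1 (k 0 2) = 0 := h 18
  have h19 : tau 0 1 0 0 (k 0 3) = 0 := h 19
  have h20 : tau 0 0 0 0 (k 1 3) = 0 := h 20
  have h21 : tau 0 0 0 1 (k 2 2) = 0 := h 21
  obtain ⟨s5_0, s5_1, s5_2, s5_3, s5_4, s5_5, s5_6, s5_7, s5_8, s5_9, s5_10, s5_11⟩ := secm101 hk
    h17 h18 h19 h20 h21
  have h22 : tau 0 0 1 0 (k 0 1) = 0 := h 22
  have h23 : tau 0 0 0 2 (k 0 2) = 0 := h 23
  have h24 : tau 0 1 0 0 (k 0 2) = 0 := h 24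
  have h25 : tau 0 0 0 0 (k 1 2) = 0 := h 25
  have h26 : tau 0 0 0 1 (k 2 3) = 0 := h 26
  obtain ⟨s6_0, s6_1, s6_2, s6_3, s6_4, s6_5, s6_6, s6_7, s6_8, s6_9, s6_10, s6_11⟩ := secm110 hk
    h22 h23 h24 h25 h26
  have h27 : tau 0 1 0 0 (k 0 1) = 0 := h 27
  have h28 : tau 0 0 0 0 (k 1 1) = 0 := h 28
  have h29 : tau 0 0 1 0 (k 1 2) = 0 := h 29
  have h30 : tau 0 0 0 1 (k 1 3) = 0 := h 30
  have h31 : tau 0 0 0 2 (k 2 2) = 0 := h 31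
  obtain ⟨s7_0, s7_1, s7_2, s7_3, s7_4, s7_5, s7_6, s7_7, s7_8, s7_9, s7_10, s7_11, s7_12, s7_13,
    s7_14, s7_15, s7_16, s7_17⟩ := sec000 hk h27 h28 h29 h30 h31
  have h32 : tau 0 0 0 1 (k 1 2) = 0 := h 32
  have h33 : tau 0 0 1 0 (k 1 3) = 0 := h 33
  obtain ⟨s8_0, s8_1, s8_2, s8_3, s8_4, s8_5, s8_6, s8_7, s8_8, s8_9, s8_10⟩ := sec011 hk h32 h33
  obtain ⟨s9_0, s9_1, s9_2, s9_3, s9_4, s9_5, s9_6, s9_7, s9_8, s9_9, s9_10, s9_11⟩ := sec101 hk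
  obtain ⟨s10_0, s10_1, s10_2, s10_3, s10_4, s10_5, s10_6, s10_7, s10_8, s10_9, s10_10, s10_11⟩ :=
    sec110 hk
  obtain ⟨s11_0, s11_1, s11_2, s11_3, s11_4, s11_5, s11_6, s11_7, s11_8⟩ := sec200 hk
  obtain ⟨s12_0, s12_1, s12_2, s12_3⟩ := sec211 hk
  obtain ⟨s13_0, s13_1⟩ := sec301 hk
  obtain ⟨s14_0, s14_1⟩ := sec310 hk
  obtain s15_0 := sec400 hk
  have sym := hk.1
  have j00 : J2 (k 0 0) := by refine ⟨?_, ?_, ?_, ?_, ?_, ?_, ?_, ?_, ?_, ?_, ?_, ?_, ?_, ?_, ?_⟩ <;> with_reducible assumption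
  have j01 : J2 (k 0 1) := by refine ⟨?_, ?_, ?_, ?_, ?_, ?_, ?_, ?_, ?_, ?_, ?_, ?_, ?_, ?_, ?_⟩ <;> with_reducible assumption
  have j02 : J2 (k 0 2) := by refine ⟨?_, ?_, ?_, ?_, ?_, ?_, ?_, ?_, ?_, ?_, ?_, ?_, ?_, ?_, ?_⟩ <;> with_reducible assumption
  have j03 : J2 (k 0 3) := by refine ⟨?_, ?_, ?_, ?_, ?_, ?_, ?_, ?_, ?_, ?_, ?_, ?_, ?_, ?_, ?_⟩ <;> with_reducible assumption
  have j11 : J2 (k 1 1) := by refine ⟨?_, ?_, ?_, ?_, ?_, ?_, ?_, ?_, ?_, ?_, ?_, ?_, ?_, ?_, ?_⟩ <;> with_reducible assumption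
  have j12 : J2 (k 1 2) := by refine ⟨?_, ?_, ?_, ?_, ?_, ?_, ?_, ?_, ?_, ?_, ?_, ?_, ?_, ?_, ?_⟩ <;> with_reducible assumption
  have j13 : J2 (k 1 3) := by refine ⟨?_, ?_, ?_, ?_, ?_, ?_, ?_, ?_, ?_, ?_, ?_, ?_, ?_, ?_, ?_⟩ <;> with_reducible assumption
  have j22 : J2 (k 2 2) := by refine ⟨?_, ?_, ?_, ?_, ?_, ?_, ?_, ?_, ?_, ?_, ?_, ?_, ?_, ?_, ?_⟩ <;> with_reducible assumption
  have j23 : J2 (k 2 3) := by refine ⟨?_, ?_, ?_, ?_, ?_, ?_, ?_, ?_, ?_, ?_, ?_, ?_, ?_, ?_, ?_⟩ <;> with_reducible assumption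
  have j33 : J2 (k 3 3) := by refine ⟨?_, ?_, ?_, ?_, ?_, ?_, ?_, ?_, ?_, ?_, ?_, ?_, ?_, ?_, ?_⟩ <;> with_reducible assumption
  have all : ∀ a b, J2 (k a b) := by
    intro a b
    fin_cases a <;> fin_cases b <;> first | assumption | (rw [sym]; assumption)
  exact KT_unique hk pbase (fun a b => (J2_jets (all a b)).1)
    (fun i a b => (J2_jets (all a b)).2.1 i) (fun i j a b => (J2_jets (all a b)).2.2 i j)

lemma cov1_expand (x : Fin 4 → SU) (a b : Fin 4) : cov1 x a b = DD a (x b)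
    - (GG 0 a b * x 0 + GG 1 a b * x 1 + GG 2 a b * x 2 + GG 3 a b * x 3) := by
  rw [cov1, Fin.sum_univ_four]

/-- The coordinates on the space of Killing vectors. -/
def frV (i : Fin 7) : (Fin 4 → SU) →ₗ[ℝ] ℝ :=
  let q : ℤ × ℤ × Fin 4 := (![(0, 0, 0), (0, 1, 0), (1, 0, 0), (0, 0, 1), (0, 0, 2), (0, 1, 2),
    (0, 0, 3)] : Fin 7 → ℤ × ℤ × Fin 4) i
  tau 0 0 q.1 q.2.1 ∘ₗ LinearMap.proj q.2.2

lemma KV_free {x : Fin 4 → SU} (e : ∀ a b, a ≠ 0 → a ≤ b → DD a (x b) + DD b (x a) = 0)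
    (e01 : DD 0 (x 1) + DD 1 (x 0) = 0)
    (e00 : 16 * (cS 0 * (cS 0 * (cS 0 * DD 0 (x 0)))) + 3 * (cS 2 * (cS 2 * x 1))
      + 3 * (cS 3 * (cS 3 * x 1)) - 3 * (cS 0 * (cS 2 * x 2)) - 3 * (cS 0 * (cS 3 * x 3)) = 0)
    (e02 : 16 * (cS 0 * (cS 0 * DD 0 (x 2))) + 16 * (cS 0 * (cS 0 * DD 2 (x 0)))
      - 6 * (cS 2 * x 1) = 0)
    (e03 : 16 * (cS 0 * (cS 0 * DD 0 (x 3))) + 16 * (cS 0 * (cS 0 * DD 3 (x 0)))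
      - 6 * (cS 3 * x 1) = 0) (h : ∀ i, frV i x = 0) :
    (∀ a, tau 0 0 0 0 (x a) = 0) ∧ (∀ a, tau 1 0 0 0 (x a) = 0) ∧ (∀ a, tau 0 1 0 0 (x a) = 0) ∧
    (∀ a, tau 0 0 1 0 (x a) = 0) ∧ (∀ a, tau 0 0 0 1 (x a) = 0) := by
  have f0 : tau 0 0 0 0 (x 0) = 0 := h 0
  have f1 : tau 0 0 0 1 (x 0) = 0 := h 1
  have f2 : tau 0 0 1 0 (x 0) = 0 := h 2
  have f3 : tau 0 0 0 0 (x 1) = 0 := h 3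
  have f4 : tau 0 0 0 0 (x 2) = 0 := h 4
  have f5 : tau 0 0 0 1 (x 2) = 0 := h 5
  have f6 : tau 0 0 0 0 (x 3) = 0 := h 6
  have q0 := congrArg (tau 1 0 0 1) e03
  have q1 := congrArg (tau 0 0 0 2) e00
  have q2 := congrArg (tau 0 0 1 1) e02
  have q3 := congrArg (tau 0 0 1 1) e03
  have q4 := congrArg (tau 0 0 0 2) e02
  have q5 := congrArg (tau 0 0 2 0) e03
  have q6 := congrArg (tau 1 0 0 1) (e 2 3 (by decide) (by decide))
  have q7 := congrArg (tau 1 0 1 0) (e 2 3 (by decide) (by decide))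
  have q8 := congrArg (tau 1 0 0 1) (e 2 2 (by decide) (by decide))
  have q9 := congrArg (tau 1 0 1 0) (e 3 3 (by decide) (by decide))
  have q10 := congrArg (tau 2 0 0 0) (e 3 3 (by decide) (by decide))
  have q11 := congrArg (tau 0 0 0 1) e03
  have q12 := congrArg (tau 0 0 0 0) e01
  have q13 := congrArg (tau 0 0 0 0) e02
  have q14 := congrArg (tau 0 0 0 0) e03
  have q15 := congrArg (tau 0 0 0 0) (e 1 2 (by decide) (by decide))
  have q16 := congrArg (tau 0 0 0 0) (e 1 3 (by decide) (by decide))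
  have q17 := congrArg (tau 0 0 0 0) (e 2 3 (by decide) (by decide))
  have q18 := congrArg (tau 0 0 0 0) e00
  have q19 := congrArg (tau 0 0 0 0) (e 1 1 (by decide) (by decide))
  have q20 := congrArg (tau 0 0 0 0) (e 2 2 (by decide) (by decide))
  have q21 := congrArg (tau 0 0 0 0) (e 3 3 (by decide) (by decide))
  norm_num [tau_D0, tau_D1, tau_D2, tau_D3, tau_u, tau_y, tau_z, tau_num, tau_neg] at q0 q1 q2 q3 q4 q5 q6 q7 q8 q9 q10
  norm_num [tau_D0, tau_D1, tau_D2, tau_D3, tau_u, tau_y, tau_z, tau_num, tau_neg] at q11 q12 q13 q14 q15 q16 q17 q18 q19 q20 q21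
  have g : ∀ a : Fin 4, tau 1 0 0 0 (x a) = 0 ∧ tau 0 1 0 0 (x a) = 0 ∧
      tau 0 0 1 0 (x a) = 0 ∧ tau 0 0 0 1 (x a) = 0 := by
    intro a
    fin_cases a <;> refine ⟨?_, ?_, ?_, ?_⟩ <;> simp <;> linarith
  refine ⟨?_, fun a => (g a).1, fun a => (g a).2.1, fun a => (g a).2.2.1, fun a => (g a).2.2.2⟩
  intro a
  fin_cases a <;> simpa

lemma KV_zero {x : Fin 4 → SU} (hx : KV x) (h : ∀ i, frV i x = 0) : ∀ a, x a = 0 := by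
  have e := hx
  have a11 := e 1 1
  have a12 := e 1 2
  have a13 := e 1 3
  have a22 := e 2 2
  have a23 := e 2 3
  have a33 := e 3 3
  have a01 := e 0 1
  have a00 := e 0 0
  have a02 := e 0 2
  have a03 := e 0 3
  simp only [cov1_expand] at a11 a12 a13 a22 a23 a33 a01 a00 a02 a03
  simp [GG] at a11 a12 a13 a22 a23 a33 a01 a00 a02 a03
  have key := KV_free (x := x) (by
      intro a b ha hab
      fin_cases a <;> fin_cases b <;> simp at ha hab ⊢ <;> assumption)
    (by linear_combination a01)
    (by linear_combination 8 * cS 0 ^ 3 * a00 + x 1 * huu + cS 0 * x 2 * hyu 2 (by decide)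
          + cS 0 * x 3 * hyu 3 (by decide))
    (by linear_combination 16 * cS 0 ^ 2 * a02 + 2 * x 1 * hyu 2 (by decide))
    (by linear_combination 16 * cS 0 ^ 2 * a03 + 2 * x 1 * hyu 3 (by decide)) h
  obtain ⟨h0, h1, h2, h3, h4⟩ := key
  refine KV_unique hx pbase (fun a => by rw [evS_tau, h0]) (fun i a => ?_)
  rw [evS_tau]
  fin_cases i <;> simp [tau_D0, tau_D1, tau_D2, tau_D3, *]

/-! ## Explicit Killing vectors and tensors -/

lemma exists_coeff {W : Type*} [AddCommGroup W] [Module ℝ W] (S : Submodule ℝ W) {n : ℕ}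
    (φ : W →ₗ[ℝ] (Fin n → ℝ)) (hφ : ∀ k ∈ S, φ k = 0 → k = 0) {ι : Type*} [Fintype ι]
    (hc : Fintype.card ι = n) (T : ι → W) (hT : ∀ i, T i ∈ S) (hi : LinearIndependent ℝ T) :
    ∀ k ∈ S, ∃ c : ι → ℝ, ∑ i, c i • T i = k := by
  intro k hk
  have hinj : Function.Injective (φ ∘ₗ S.subtype) := by
    rw [← LinearMap.ker_eq_bot, LinearMap.ker_eq_bot']
    intro m hm
    exact Subtype.ext (hφ m.1 m.2 hm)
  have : Module.Finite ℝ S := Module.Finite.of_injective _ hinj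
  have h1 : Module.finrank ℝ S ≤ n := by
    simpa using LinearMap.finrank_le_finrank_of_injective hinj
  have hi2 : LinearIndependent ℝ (fun i => (⟨T i, hT i⟩ : S)) :=
    LinearIndependent.of_comp S.subtype hi
  have h2 := hi2.fintype_card_le_finrank
  have h3 := hi2.span_eq_top_of_card_eq_finrank' (by omega)
  have h4 : (⟨k, hk⟩ : S) ∈ Submodule.span ℝ (Set.range fun i => (⟨T i, hT i⟩ : S)) := by
    rw [h3]; trivial
  obtain ⟨c, hc⟩ := (Submodule.mem_span_range_iff_exists_fun ℝ).1 h4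
  refine ⟨c, ?_⟩
  have := congrArg Subtype.val hc
  simpa using this

/-- Symmetrized product (without the factor `1/2`). -/
def symP (x y : Fin 4 → SU) (a b : Fin 4) : SU := x a * y b + x b * y a

lemma cov2_symP (x y : Fin 4 → SU) (c a b : Fin 4) : cov2 (symP x y) c a b =
    cov1 x c a * y b + x a * cov1 y c b + cov1 x c b * y a + x b * cov1 y c a := by
  rw [cov2_expand, cov1_expand, cov1_expand, cov1_expand, cov1_expand]
  simp only [symP, map_add, Derivation.leibniz, smul_eq_mul]
  ring

lemma KT_symP {x y : Fin 4 → SU} (hx : KV x) (hy : KV y) : KT (symP x y) := by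
  refine ⟨fun a b => by simp only [symP]; ring, fun a b c => ?_⟩
  rw [cov2_symP, cov2_symP, cov2_symP]
  linear_combination y a * hx b c + y b * hx a c + y c * hx a b
    + x a * hy b c + x b * hy a c + x c * hy a b

/-- The constant `1/16`. -/
def wS : SU := algebraMap ℝ SU (1 / 16)

lemma wS_eq : 16 * wS = 1 := by
  apply SU_ext
  intro p
  show (16 : ℝ) * (1 / 16) = 1
  norm_num

lemma DD_w (i : Fin 4) : DD i wS = 0 := Derivation.map_algebraMap _ _

lemma DD_num (i : Fin 4) (n : ℕ) [n.AtLeastTwo] : DD i (ofNat(n) : SU) = 0 := by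
  rw [← Nat.cast_ofNat]
  exact (DD i).map_natCast _

lemma DD_t (i : Fin 4) : DD i tS = if i = 0 then 4 * wS * sS ^ 3 else 0 := by
  have h := four_DDt i
  have : DD i tS = 4 * wS * (4 * DD i tS) := by linear_combination -DD i tS * wS_eq
  rw [this, h]
  split_ifs <;> simp

lemma DD_s (i : Fin 4) : DD i sS = if i = 0 then - (4 * wS * sS ^ 5) else 0 := by
  rw [DDs, DD_t]
  split_ifs
  · ring
  · simp

lemma DDH0 : DD 0 HS = -3 * wS * sS ^ 12 * (cS 2 ^ 2 + cS 3 ^ 2) := by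
  linear_combination wS * hu_eq - DD 0 HS * wS_eq

lemma DDH1 : DD 1 HS = 0 := by
  apply nat_cancel (n := 32) (by norm_num)
  have h := congrArg (DD 1) HS_eq
  simp [Derivation.leibniz, Derivation.leibniz_pow, DD_cS, DD_s, DD_num] at h
  push_cast
  linear_combination h

lemma DDH2 : DD 2 HS = 3 * wS * sS ^ 8 * cS 2 := by
  linear_combination wS * hx_eq 2 (by decide) - DD 2 HS * wS_eq

lemma DDH3 : DD 3 HS = 3 * wS * sS ^ 8 * cS 3 := by
  linear_combination wS * hx_eq 3 (by decide) - DD 3 HS * wS_eq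

/-- The seven Killing vectors: `m, α₁, α₂, β₁, β₂, J, S`, suitably rescaled. -/
def xC {R : Type*} [CommRing R] (t s v y z : R) : Fin 7 → Fin 4 → R :=
  ![![1, 0, 0, 0],
    ![-(y * s ^ 3), 0, 4 * t, 0],
    ![-(3 * y * s), 0, 4 * t ^ 3, 0],
    ![-(z * s ^ 3), 0, 0, 4 * t],
    ![-(3 * z * s), 0, 0, 4 * t ^ 3],
    ![0, 0, -z, y],
    ![16 * v - 3 * s ^ 4 * (y ^ 2 + z ^ 2), -(16 * t ^ 4), 0, 0]]

/-- The seven Killing vectors. -/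
def xV : Fin 7 → Fin 4 → SU := xC tS sS (cS 1) (cS 2) (cS 3)

lemma KV_of_le {x : Fin 4 → SU} (h : ∀ a b, a ≤ b → cov1 x a b + cov1 x b a = 0) : KV x := by
  intro a b
  rcases le_total a b with hab | hab
  · exact h a b hab
  · rw [add_comm]; exact h b a hab

/-- Abstract Christoffel symbols. -/
def GA {R : Type*} [CommRing R] (s y z w : R) (d a b : Fin 4) : R :=
  if d = 1 ∧ a = 0 ∧ b = 0 then -3 * w * s ^ 12 * (y ^ 2 + z ^ 2)
  else if (d = 2 ∧ a = 0 ∧ b = 0) ∨ (d = 1 ∧ ((a = 0 ∧ b = 2) ∨ (a = 2 ∧ b = 0))) then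
    3 * w * s ^ 8 * y
  else if (d = 3 ∧ a = 0 ∧ b = 0) ∨ (d = 1 ∧ ((a = 0 ∧ b = 3) ∨ (a = 3 ∧ b = 0))) then
    3 * w * s ^ 8 * z
  else 0

lemma GG_GA : GG = GA sS (cS 2) (cS 3) wS := by
  funext d a b
  unfold GG GA
  rw [DDH0, DDH2, DDH3]

set_option maxHeartbeats 2000000 in
lemma xC_eq {R : Type*} [CommRing R] [Algebra ℝ R] (D : Fin 4 → Derivation ℝ R R)
    (t s v y z w : R) (r1 : t * s = 1) (r2 : 16 * w = 1)
    (dt : ∀ i, D i t = if i = 0 then 4 * w * s ^ 3 else 0)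
    (ds : ∀ i, D i s = if i = 0 then -(4 * w * s ^ 5) else 0)
    (dv : ∀ i, D i v = if i = 1 then 1 else 0) (dy : ∀ i, D i y = if i = 2 then 1 else 0)
    (dz : ∀ i, D i z = if i = 3 then 1 else 0)
    (dn : ∀ i (n : ℕ) [n.AtLeastTwo], D i (ofNat(n) : R) = 0)
    (i : Fin 7) (a b : Fin 4) (hab : a ≤ b) (x : Fin 4 → R) (hx : x = xC t s v y z i)
    (G : Fin 4 → Fin 4 → Fin 4 → R) (hG : G = GA s y z w) :
    (D a (x b) - (G 0 a b * x 0 + G 1 a b * x 1 + G 2 a b * x 2 + G 3 a b * x 3))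
    + (D b (x a) - (G 0 b a * x 0 + G 1 b a * x 1 + G 2 b a * x 2 + G 3 b a * x 3)) = 0 := by
  subst hG hx
  fin_cases a <;> fin_cases b <;> simp [GA] at hab ⊢ <;> fin_cases i <;>
    simp [xC, Derivation.leibniz, Derivation.leibniz_pow, dt, ds, dv, dy, dz, dn] <;> grind

lemma xV_KV (i : Fin 7) : KV (xV i) := by
  apply KV_of_le
  intro a b hab
  rw [cov1_expand, cov1_expand]
  exact xC_eq DD tS sS (cS 1) (cS 2) (cS 3) wS ts_one wS_eq DD_t DD_s (fun i => DD_cS i 1)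
    (fun i => DD_cS i 2) (fun i => DD_cS i 3) DD_num i a b hab _ rfl _ GG_GA

/-- The metric. -/
def gS : Fin 4 → Fin 4 → SU :=
  ![![-(2 * HS), -1, 0, 0], ![-1, 0, 0, 0], ![0, 0, 1, 0], ![0, 0, 0, 1]]

lemma KT_of_le {k : Fin 4 → Fin 4 → SU} (hs : ∀ a b, k a b = k b a)
    (h : ∀ a b c, a ≤ b → b ≤ c → cov2 k c a b + cov2 k a b c + cov2 k b c a = 0) : KT k := by
  have sw : ∀ c a b, cov2 k c a b = cov2 k c b a := by
    intro c a b
    rw [cov2_expand, cov2_expand, hs a b, hs 0 b, hs 1 b, hs 2 b, hs 3 b, hs a 0, hs a 1, hs a 2,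
      hs a 3]
    ring
  refine ⟨hs, fun a b c => ?_⟩
  rcases le_total a b with h1 | h1 <;> rcases le_total b c with h2 | h2 <;>
    rcases le_total a c with h3 | h3
  · exact h a b c h1 h2
  · exact h a b c h1 h2
  · linear_combination h a c b h3 h2 + sw c a b + sw a b c + sw b c a
  · linear_combination h c a b h3 h1
  · linear_combination h b a c h1 h3 + sw c a b + sw a b c + sw b c a
  · linear_combination h b c a h2 h3
  · linear_combination h c b a h2 h1 + sw c a b + sw a b c + sw b c a
  · linear_combination h c b a h2 h1 + sw c a b + sw a b c + sw b c a

lemma gS_KT : KT gS := by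
  apply KT_of_le
  · intro a b
    fin_cases a <;> fin_cases b <;> rfl
  · intro a b c hab hbc
    simp only [cov2_expand]
    fin_cases a <;> fin_cases b <;> fin_cases c <;>
      simp [gS, GG, DD_num, DDH1, Derivation.leibniz] at hab hbc ⊢ <;> ring

/-- The ten components of the six irreducible Killing tensors, in the order
`uu, uv, uy, uz, vv, vy, vz, yy, yz, zz`. -/
def bC {R : Type*} [CommRing R] (t s v y z : R) : Fin 6 → Fin 10 → R :=
  ![
    ![5 * s ^ 9 * y * z ^ 2 + 5 * s ^ 9 * y ^ 3, 24 * s * y, -4 * s ^ 5 * z ^ 2 - 6 * s ^ 5 * y ^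
      2, -2 * s ^ 5 * y * z, 0, -32 * t ^ 3, 0, 0, 8 * s * z, -16 * s * y],
    ![5 * s ^ 9 * z ^ 3 + 5 * s ^ 9 * y ^ 2 * z, 24 * s * z, -2 * s ^ 5 * y * z, -6 * s ^ 5 * z ^
      2 - 4 * s ^ 5 * y ^ 2, 0, 0, -32 * t ^ 3, -16 * s * z, 8 * s * y, 0],
    ![7 * s ^ 12 * z ^ 4 + 14 * s ^ 12 * y ^ 2 * z ^ 2 + 7 * s ^ 12 * y ^ 4 - 24 * s ^ 8 * v * z ^
      2 - 24 * s ^ 8 * v * y ^ 2, 48 * s ^ 4 * z ^ 2 + 48 * s ^ 4 * y ^ 2 - 128 * v, -8 * s ^ 8 *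
      y * z ^ 2 - 8 * s ^ 8 * y ^ 3, -8 * s ^ 8 * z ^ 3 - 8 * s ^ 8 * y ^ 2 * z, 256 * t ^ 4, -64
      * y, -64 * z, -16 * s ^ 4 * z ^ 2 + 128 * v, 16 * s ^ 4 * y * z, -16 * s ^ 4 * y ^ 2 + 128 *
      v],
    ![3 * s ^ 10 * z ^ 4 + 9 * s ^ 10 * y ^ 2 * z ^ 2 + 6 * s ^ 10 * y ^ 4 + 4 * s ^ 6 * v * z ^ 2
      + 8 * s ^ 6 * v * y ^ 2, 16 * s ^ 2 * z ^ 2 + 32 * s ^ 2 * y ^ 2, -6 * s ^ 6 * y * z ^ 2 - 8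
      * s ^ 6 * y ^ 3 - 32 * s ^ 2 * v * y, -4 * s ^ 6 * z ^ 3 - 6 * s ^ 6 * y ^ 2 * z - 16 * s ^
      2 * v * z, 0, -64 * t ^ 2 * y, -32 * t ^ 2 * z, -24 * s ^ 2 * z ^ 2 + 128 * t ^ 2 * v, 24 *
      s ^ 2 * y * z, -24 * s ^ 2 * y ^ 2 + 64 * t ^ 2 * v],
    ![3 * s ^ 10 * y * z ^ 3 + 3 * s ^ 10 * y ^ 3 * z + 4 * s ^ 6 * v * y * z, 16 * s ^ 2 * y * z,
      -s ^ 6 * z ^ 3 - 3 * s ^ 6 * y ^ 2 * z - 8 * s ^ 2 * v * z, -3 * s ^ 6 * y * z ^ 2 - s ^ 6 *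
      y ^ 3 - 8 * s ^ 2 * v * y, 0, -16 * t ^ 2 * z, -16 * t ^ 2 * y, 0, 32 * t ^ 2 * v, 0],
    ![3 * s ^ 10 * z ^ 4 + 3 * s ^ 10 * y ^ 2 * z ^ 2 + 4 * s ^ 6 * v * z ^ 2, 16 * s ^ 2 * z ^ 2,
      -2 * s ^ 6 * y * z ^ 2, -4 * s ^ 6 * z ^ 3 - 2 * s ^ 6 * y ^ 2 * z - 16 * s ^ 2 * v * z, 0,
      0, -32 * t ^ 2 * z, -8 * s ^ 2 * z ^ 2, 8 * s ^ 2 * y * z, -8 * s ^ 2 * y ^ 2 + 64 * t ^ 2 *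
      v]]

/-- Position of a component in the list of ten. -/
def ix10 : Fin 4 → Fin 4 → Fin 10 :=
  ![![0, 1, 2, 3], ![1, 4, 5, 6], ![2, 5, 7, 8], ![3, 6, 8, 9]]

/-- The six irreducible Killing tensors. -/
def bT (i : Fin 6) (a b : Fin 4) : SU := bC tS sS (cS 1) (cS 2) (cS 3) i (ix10 a b)

set_option maxHeartbeats 4000000 in
lemma bC_eq {R : Type*} [CommRing R] [Algebra ℝ R] (D : Fin 4 → Derivation ℝ R R)
    (t s v y z w : R) (r1 : t * s = 1) (r2 : 16 * w = 1)
    (dt : ∀ i, D i t = if i = 0 then 4 * w * s ^ 3 else 0)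
    (ds : ∀ i, D i s = if i = 0 then -(4 * w * s ^ 5) else 0)
    (dv : ∀ i, D i v = if i = 1 then 1 else 0) (dy : ∀ i, D i y = if i = 2 then 1 else 0)
    (dz : ∀ i, D i z = if i = 3 then 1 else 0)
    (dn : ∀ i (n : ℕ) [n.AtLeastTwo], D i (ofNat(n) : R) = 0)
    (i : Fin 6) (a b c : Fin 4) (hab : a ≤ b) (hbc : b ≤ c) (k : Fin 4 → Fin 4 → R)
    (hk : k = fun a b => bC t s v y z i (ix10 a b))
    (G : Fin 4 → Fin 4 → Fin 4 → R) (hG : G = GA s y z w) :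
    (D c (k a b) - (G 0 c a * k 0 b + G 1 c a * k 1 b + G 2 c a * k 2 b + G 3 c a * k 3 b)
      - (G 0 c b * k a 0 + G 1 c b * k a 1 + G 2 c b * k a 2 + G 3 c b * k a 3))
    + (D a (k b c) - (G 0 a b * k 0 c + G 1 a b * k 1 c + G 2 a b * k 2 c + G 3 a b * k 3 c)
      - (G 0 a c * k b 0 + G 1 a c * k b 1 + G 2 a c * k b 2 + G 3 a c * k b 3))
    + (D b (k c a) - (G 0 b c * k 0 a + G 1 b c * k 1 a + G 2 b c * k 2 a + G 3 b c * k 3 a)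
      - (G 0 b a * k c 0 + G 1 b a * k c 1 + G 2 b a * k c 2 + G 3 b a * k c 3)) = 0 := by
  subst hG hk
  fin_cases a <;> fin_cases b <;> fin_cases c <;> simp [GA, ix10] at hab hbc ⊢ <;> fin_cases i <;>
    simp [bC, Derivation.leibniz, Derivation.leibniz_pow, dt, ds, dv, dy, dz, dn] <;> grind

lemma bT_KT (i : Fin 6) : KT (bT i) := by
  apply KT_of_le
  · intro a b
    fin_cases a <;> fin_cases b <;> rfl
  · intro a b c hab hbc
    rw [cov2_expand, cov2_expand, cov2_expand]
    exact bC_eq DD tS sS (cS 1) (cS 2) (cS 3) wS ts_one wS_eq DD_t DD_s (fun i => DD_cS i 1)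
      (fun i => DD_cS i 2) (fun i => DD_cS i 3) DD_num i a b c hab hbc _ rfl _ GG_GA

/-! ## Linear independence -/

/-- The pairs of Killing vectors whose products are used as a basis. -/
def pr27 : Fin 27 → Fin 7 × Fin 7 :=
  ![(0, 0), (0, 1), (0, 2), (0, 3), (0, 4), (0, 6), (1, 1), (1, 2), (1, 3), (1, 4), (1, 5),
    (1, 6), (2, 2), (2, 3), (2, 4), (2, 5), (2, 6), (3, 3), (3, 4), (3, 5), (3, 6), (4, 4),
    (4, 5), (4, 6), (5, 5), (5, 6), (6, 6)]

/-- The metric at a point. -/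
def gR (s y z : ℝ) : Fin 4 → Fin 4 → ℝ :=
  ![![-(3 / 16 * s ^ 8 * (y ^ 2 + z ^ 2)), -1, 0, 0], ![-1, 0, 0, 0], ![0, 0, 1, 0], ![0, 0, 0, 1]]

set_option maxHeartbeats 4000000 in
lemma coeff_zero (c : Option (Fin 27) → ℝ) (e : Fin 6 → ℝ)
    (H : ∀ t v y z : ℝ, 0 < t → ∀ a b : Fin 4, c none * gR t⁻¹ y z a b
      + ∑ i : Fin 27, c (some i) * (xC t t⁻¹ v y z (pr27 i).1 a * xC t t⁻¹ v y z (pr27 i).2 b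
        + xC t t⁻¹ v y z (pr27 i).1 b * xC t t⁻¹ v y z (pr27 i).2 a)
      + ∑ i, e i * bC t t⁻¹ v y z i (ix10 a b) = 0) : (∀ i, c i = 0) ∧ (∀ i, e i = 0) := by
  have q0 := H 1 0 0 0 (by norm_num) 1 1
  have q1 := H 2 0 0 0 (by norm_num) 1 1
  simp [xC, bC, gR, pr27, ix10, Fin.sum_univ_succ] at q0 q1
  have z27 : c (some 26) = 0 := by linarith
  have z30 : e 2 = 0 := by linarith
  have q2 := H 1 0 0 0 (by norm_num) 1 2
  have q3 := H 1 0 (-1) 0 (by norm_num) 1 2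
  have q4 := H 1 0 0 (-1) (by norm_num) 1 2
  have q5 := H 2 0 0 0 (by norm_num) 1 2
  have q6 := H 2 0 0 (-1) (by norm_num) 1 2
  have q7 := H 3 0 0 0 (by norm_num) 1 2
  simp [xC, bC, gR, pr27, ix10, Fin.sum_univ_succ, z27, z30] at q2 q3 q4 q5 q6 q7
  have z12 : c (some 11) = 0 := by linarith
  have z31 : e 3 = 0 := by linarith
  have z26 : c (some 25) = 0 := by linarith
  have z17 : c (some 16) = 0 := by linarith
  have z32 : e 4 = 0 := by linarith
  have z28 : e 0 = 0 := by linarith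
  have q8 := H 1 0 0 0 (by norm_num) 1 3
  have q9 := H 1 0 0 (-1) (by norm_num) 1 3
  have q10 := H 2 0 0 0 (by norm_num) 1 3
  have q11 := H 3 0 0 0 (by norm_num) 1 3
  simp [xC, bC, gR, pr27, ix10, Fin.sum_univ_succ, z27, z30, z12, z31, z26, z17, z32, z28] at q8 q9 q10 q11
  have z21 : c (some 20) = 0 := by linarith
  have z33 : e 5 = 0 := by linarith
  have z24 : c (some 23) = 0 := by linarith
  have z29 : e 1 = 0 := by linarith
  have q12 := H 1 0 0 0 (by norm_num) 2 2
  have q13 := H 1 0 0 (-1) (by norm_num) 2 2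
  have q14 := H 1 0 0 1 (by norm_num) 2 2
  have q15 := H 2 0 0 0 (by norm_num) 2 2
  have q16 := H 2 0 0 (-1) (by norm_num) 2 2
  simp [xC, bC, gR, pr27, ix10, Fin.sum_univ_succ, z27, z30, z12, z31, z26, z17, z32, z28, z21, z33, z24, z29] at q12 q13 q14 q15 q16
  have z11 : c (some 10) = 0 := by linarith
  have z25 : c (some 24) = 0 := by linarith
  have z16 : c (some 15) = 0 := by linarith
  have q17 := H 1 0 0 0 (by norm_num) 2 3
  have q18 := H 1 0 0 (-1) (by norm_num) 2 3
  have q19 := H 2 0 0 0 (by norm_num) 2 3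
  have q20 := H 2 0 0 (-1) (by norm_num) 2 3
  have q21 := H 3 0 0 0 (by norm_num) 2 3
  simp [xC, bC, gR, pr27, ix10, Fin.sum_univ_succ, z27, z30, z12, z31, z26, z17, z32, z28, z21, z33, z24, z29, z11, z25, z16] at q17 q18 q19 q20 q21
  have z9 : c (some 8) = 0 := by linarith
  have z20 : c (some 19) = 0 := by linarith
  have z23 : c (some 22) = 0 := by linarith
  have z15 : c (some 14) = 0 := by linarith
  have q22 := H 1 0 0 0 (by norm_num) 0 1
  have q23 := H 2 0 0 0 (by norm_num) 0 1
  simp [xC, bC, gR, pr27, ix10, Fin.sum_univ_succ, z27, z30, z12, z31, z26, z17, z32, z28, z21, z33, z24, z29, z11, z25, z16, z9, z20, z23, z15] at q22 q23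
  have z0 : c none = 0 := by linarith
  have z6 : c (some 5) = 0 := by linarith
  have q24 := H 1 0 0 0 (by norm_num) 0 2
  have q25 := H 1 0 (-1) 0 (by norm_num) 0 2
  have q26 := H 2 0 0 0 (by norm_num) 0 2
  have q27 := H 2 0 (-1) 0 (by norm_num) 0 2
  have q28 := H 3 0 (-1) 0 (by norm_num) 0 2
  simp [xC, bC, gR, pr27, ix10, Fin.sum_univ_succ, z27, z30, z12, z31, z26, z17, z32, z28, z21, z33, z24, z29, z11, z25, z16, z9, z20, z23, z15, z0, z6] at q24 q25 q26 q27 q28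
  have z2 : c (some 1) = 0 := by linarith
  have z7 : c (some 6) = 0 := by linarith
  have z3 : c (some 2) = 0 := by linarith
  have z8 : c (some 7) = 0 := by linarith
  have z13 : c (some 12) = 0 := by linarith
  have q29 := H 1 0 0 0 (by norm_num) 0 3
  have q30 := H 1 0 0 (-1) (by norm_num) 0 3
  have q31 := H 2 0 0 0 (by norm_num) 0 3
  have q32 := H 2 0 0 (-1) (by norm_num) 0 3
  have q33 := H 3 0 0 (-1) (by norm_num) 0 3
  simp [xC, bC, gR, pr27, ix10, Fin.sum_univ_succ, z27, z30, z12, z31, z26, z17, z32, z28, z21, z33, z24, z29, z11, z25, z16, z9, z20, z23, z15, z0, z6, z2, z7, z3, z8, z13] at q29 q30 q31 q32 q33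
  have z4 : c (some 3) = 0 := by linarith
  have z18 : c (some 17) = 0 := by linarith
  have z5 : c (some 4) = 0 := by linarith
  have z19 : c (some 18) = 0 := by linarith
  have z22 : c (some 21) = 0 := by linarith
  have q34 := H 1 0 0 0 (by norm_num) 0 0
  simp [xC, bC, gR, pr27, ix10, Fin.sum_univ_succ, z27, z30, z12, z31, z26, z17, z32, z28, z21, z33, z24, z29, z11, z25, z16, z9, z20, z23, z15, z0, z6, z2, z7, z3, z8, z13, z4, z18, z5, z19, z22] at q34
  have z1 : c (some 0) = 0 := by linarith
  have q35 := H 1 0 0 1 (by norm_num) 0 2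
  have q36 := H 1 0 0 0 (by norm_num) 2 3
  simp [xC, bC, gR, pr27, ix10, Fin.sum_univ_succ, z27, z30, z12, z31, z26, z17, z32, z28, z21, z33, z24, z29, z11, z25, z16, z9, z20, z23, z15, z0, z6, z2, z7, z3, z8, z13, z4, z18, z5, z19, z22, z1] at q35 q36
  have z10 : c (some 9) = 0 := by linarith
  have z14 : c (some 13) = 0 := by linarith
  exact ⟨by rintro (_ | i); exacts [z0, by fin_cases i <;> assumption], by intro i; fin_cases i <;> assumption⟩

/-! ## Assembly -/

/-- Evaluation as a ring homomorphism. -/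
def evR (p : UU) : SU →+* ℝ := (Pi.evalRingHom (fun _ : UU => ℝ) p).comp SU.val.toRingHom

lemma evR_apply (p : UU) (f : SU) : evR p f = f.1 p := rfl

lemma xC_map {R R' : Type*} [CommRing R] [CommRing R'] (f : R →+* R') (t s v y z : R) (i : Fin 7)
    (a : Fin 4) : f (xC t s v y z i a) = xC (f t) (f s) (f v) (f y) (f z) i a := by
  have hn : ∀ (n : ℕ) [n.AtLeastTwo], f (ofNat(n)) = ofNat(n) := fun n _ => map_ofNat f n
  fin_cases i <;> fin_cases a <;> simp [xC, hn]

set_option maxHeartbeats 4000000 in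
lemma bC_map {R R' : Type*} [CommRing R] [CommRing R'] (f : R →+* R') (t s v y z : R) (i : Fin 6)
    (a : Fin 10) : f (bC t s v y z i a) = bC (f t) (f s) (f v) (f y) (f z) i a := by
  have hn : ∀ (n : ℕ) [n.AtLeastTwo], f (ofNat(n)) = ofNat(n) := fun n _ => map_ofNat f n
  fin_cases i <;> fin_cases a <;> simp [bC, hn]

/-- A point with prescribed fourth root of `u`. -/
def pt (t v y z : ℝ) (ht : 0 < t) : UU := ⟨![t ^ 4, v, y, z], pow_pos ht 4⟩

lemma evR_t (t v y z : ℝ) (ht : 0 < t) : evR (pt t v y z ht) tS = t := tf_of_pow ht rfl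

lemma evR_s (t v y z : ℝ) (ht : 0 < t) : evR (pt t v y z ht) sS = t⁻¹ :=
  congrArg Inv.inv (tf_of_pow ht rfl)

lemma evR_xV (t v y z : ℝ) (ht : 0 < t) (i : Fin 7) (a : Fin 4) :
    evR (pt t v y z ht) (xV i a) = xC t t⁻¹ v y z i a := by
  rw [xV, xC_map, evR_t, evR_s]; rfl

lemma evR_bT (t v y z : ℝ) (ht : 0 < t) (i : Fin 6) (a b : Fin 4) :
    evR (pt t v y z ht) (bT i a b) = bC t t⁻¹ v y z i (ix10 a b) := by
  rw [bT, bC_map, evR_t, evR_s]; rfl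

lemma evR_g (t v y z : ℝ) (ht : 0 < t) (a b : Fin 4) :
    evR (pt t v y z ht) (gS a b) = gR t⁻¹ y z a b := by
  have h := congrArg (evR (pt t v y z ht)) HS_eq
  simp only [map_mul, map_add, map_pow, map_ofNat, evR_s] at h
  have h2 : evR (pt t v y z ht) (cS 2) = y := rfl
  have h3 : evR (pt t v y z ht) (cS 3) = z := rfl
  rw [h2, h3] at h
  have hn : evR (pt t v y z ht) 2 = 2 := map_ofNat _ 2
  simp only [inv_pow] at h
  fin_cases a <;> fin_cases b <;> simp [gS, gR, hn] <;> linarith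

lemma evR_smul (p : UU) (r : ℝ) (f : SU) : evR p (r • f) = r * evR p f := rfl

/-- The reducible part of the basis. -/
def rT : Option (Fin 27) → Fin 4 → Fin 4 → SU
  | none => gS
  | some i => symP (xV (pr27 i).1) (xV (pr27 i).2)

lemma T_li : LinearIndependent ℝ (Sum.elim rT bT) := by
  rw [Fintype.linearIndependent_iff]
  intro c hc
  have key := coeff_zero (fun i => c (Sum.inl i)) (fun i => c (Sum.inr i)) ?_
  · rintro (i | i)
    exacts [key.1 i, key.2 i]
  · intro t v y z ht a b
    have h := congrArg (evR (pt t v y z ht)) (congrFun (congrFun hc a) b)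
    simp only [Fintype.sum_sum_type, Fintype.sum_option, Sum.elim_inl, Sum.elim_inr, Pi.add_apply,
      Finset.sum_apply, Pi.smul_apply, map_add, map_sum, evR_smul, rT, symP, map_mul, evR_xV,
      evR_bT, evR_g, Pi.zero_apply, map_zero] at h
    exact h

lemma xV_li : LinearIndependent ℝ xV := by
  rw [Fintype.linearIndependent_iff]
  intro c hc
  have H : ∀ t v y z : ℝ, 0 < t → ∀ a : Fin 4, ∑ i, c i * xC t t⁻¹ v y z i a = 0 := by
    intro t v y z ht a
    have h := congrArg (evR (pt t v y z ht)) (congrFun hc a)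
    simp only [Finset.sum_apply, Pi.smul_apply, map_sum, evR_smul, evR_xV, Pi.zero_apply,
      map_zero] at h
    exact h
  have q0 := H 1 0 0 0 (by norm_num) 0
  have q1 := H 1 0 0 0 (by norm_num) 1
  have q2 := H 1 0 0 0 (by norm_num) 2
  have q3 := H 2 0 0 0 (by norm_num) 2
  have q4 := H 1 0 0 0 (by norm_num) 3
  have q5 := H 2 0 0 0 (by norm_num) 3
  have q6 := H 1 0 1 0 (by norm_num) 3
  simp [xC, Fin.sum_univ_succ] at q0 q1 q2 q3 q4 q5 q6
  intro i
  fin_cases i <;> simp <;> linarith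

/-- The space of Killing tensors. -/
def KTs : Submodule ℝ (Fin 4 → Fin 4 → SU) where
  carrier := {k | KT k}
  zero_mem' := ⟨fun _ _ => rfl, fun a b c => by simp [cov2]⟩
  add_mem' := by
    rintro k l ⟨hk, hk2⟩ ⟨hl, hl2⟩
    refine ⟨fun a b => by simp only [Pi.add_apply]; rw [hk, hl], fun a b c => ?_⟩
    have hadd : ∀ c a b, cov2 (k + l) c a b = cov2 k c a b + cov2 l c a b := by
      intro c a b
      simp only [cov2_expand, Pi.add_apply, map_add]
      ring
    simp only [hadd]
    linear_combination hk2 a b c + hl2 a b c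
  smul_mem' := by
    rintro r k ⟨hk, hk2⟩
    refine ⟨fun a b => by simp only [Pi.smul_apply]; rw [hk], fun a b c => ?_⟩
    have hs : ∀ c a b, cov2 (r • k) c a b = r • cov2 k c a b := by
      intro c a b
      simp only [cov2_expand, Pi.smul_apply, Derivation.map_smul, mul_smul_comm, smul_sub,
        smul_add]
    simp only [hs, ← smul_add]
    rw [hk2, smul_zero]

/-- The space of Killing vectors. -/
def KVs : Submodule ℝ (Fin 4 → SU) where
  carrier := {x | KV x}
  zero_mem' := fun a b => by simp [cov1]
  add_mem' := by
    intro k l hk hl a b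
    have hadd : ∀ a b, cov1 (k + l) a b = cov1 k a b + cov1 l a b := by
      intro a b
      simp only [cov1_expand, Pi.add_apply, map_add]
      ring
    simp only [hadd]
    linear_combination hk a b + hl a b
  smul_mem' := by
    intro r k hk a b
    have hs : ∀ a b, cov1 (r • k) a b = r • cov1 k a b := by
      intro a b
      simp only [cov1_expand, Pi.smul_apply, Derivation.map_smul, mul_smul_comm, smul_sub,
        smul_add]
    simp only [hs, ← smul_add]
    rw [hk, smul_zero]

lemma KT_coeff {k : Fin 4 → Fin 4 → SU} (hk : KT k) :
    ∃ c : Option (Fin 27) ⊕ Fin 6 → ℝ, ∑ i, c i • Sum.elim rT bT i = k := by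
  refine exists_coeff KTs (LinearMap.pi frT) ?_ (n := 34) (by simp) _ ?_ T_li k hk
  · intro k hk h
    funext a b
    exact KT_zero hk (fun i => congrFun h i) a b
  · rintro ((_ | i) | i)
    exacts [gS_KT, KT_symP (xV_KV _) (xV_KV _), bT_KT i]

lemma KV_coeff {x : Fin 4 → SU} (hx : KV x) : ∃ c : Fin 7 → ℝ, ∑ i, c i • xV i = x := by
  refine exists_coeff KVs (LinearMap.pi frV) ?_ (n := 7) (by simp) _ xV_KV xV_li x hx
  intro k hk h
  funext a
  exact KV_zero hk (fun i => congrFun h i) a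

lemma symP_comm (x y : Fin 4 → SU) : symP x y = symP y x := by
  funext a b
  simp only [symP]
  ring

set_option maxHeartbeats 1000000 in
lemma mJ_gen {R : Type*} [CommRing R] (t s v y z : R) (r : t * s = 1) (x : Fin 7 → Fin 4 → R)
    (hx : x = xC t s v y z) (a b : Fin 4) :
    8 * (x 0 a * x 5 b + x 0 b * x 5 a)
      = (x 1 a * x 4 b + x 1 b * x 4 a) - (x 2 a * x 3 b + x 2 b * x 3 a) := by
  subst hx
  fin_cases a <;> fin_cases b <;> simp [xC] <;> grind

lemma mJ_rel : (8 : ℝ) • symP (xV 0) (xV 5) = symP (xV 1) (xV 4) - symP (xV 2) (xV 3) := by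
  have e8 : ∀ f : SU, (8 : ℝ) • f = 8 * f := fun f => SU_ext fun p => rfl
  funext a b
  simp only [Pi.smul_apply, Pi.sub_apply, e8]
  exact mJ_gen tS sS (cS 1) (cS 2) (cS 3) ts_one _ rfl a b

/-- The reducible subspace. -/
def Rsp : Submodule ℝ (Fin 4 → Fin 4 → SU) := Submodule.span ℝ (Set.range rT)

lemma pair_mem (j l : Fin 7) : symP (xV j) (xV l) ∈ Rsp := by
  have hs : ∀ i, symP (xV (pr27 i).1) (xV (pr27 i).2) ∈ Rsp := fun i =>
    Submodule.subset_span ⟨some i, rfl⟩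
  have h05 : symP (xV 0) (xV 5) ∈ Rsp := by
    have h : symP (xV 0) (xV 5) = (8 : ℝ)⁻¹ • (symP (xV 1) (xV 4) - symP (xV 2) (xV 3)) := by
      rw [← mJ_rel, smul_smul]; norm_num
    rw [h]
    exact Rsp.smul_mem _ (Rsp.sub_mem (hs 9) (hs 13))
  have hd : ∀ j l : Fin 7, (∃ i, pr27 i = (j, l)) ∨ (∃ i, pr27 i = (l, j)) ∨
      (j = 0 ∧ l = 5) ∨ (j = 5 ∧ l = 0) := by decide
  rcases hd j l with ⟨i, hi⟩ | ⟨i, hi⟩ | ⟨rfl, rfl⟩ | ⟨rfl, rfl⟩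
  · have := hs i
    rwa [hi] at this
  · have := hs i
    rw [hi] at this
    rwa [symP_comm]
  · exact h05
  · rwa [symP_comm]

lemma symP_mem {x y : Fin 4 → SU} (hx : KV x) (hy : KV y) : symP x y ∈ Rsp := by
  obtain ⟨c, rfl⟩ := KV_coeff hx
  obtain ⟨d, rfl⟩ := KV_coeff hy
  have h : symP (∑ i, c i • xV i) (∑ i, d i • xV i)
      = ∑ i, ∑ j, (c i * d j) • symP (xV i) (xV j) := by
    funext a b
    simp only [symP, Finset.sum_apply, Pi.smul_apply, Finset.sum_mul_sum, smul_add,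
      Finset.sum_add_distrib, smul_mul_smul_comm]
  rw [h]
  exact Rsp.sum_mem fun i _ => Rsp.sum_mem fun j _ => Rsp.smul_mem _ (pair_mem i j)

lemma gS_apply (p : UU) (a b : Fin 4) : (gS a b).1 p = ppMetric HH p a b := by
  fin_cases a <;> fin_cases b <;> simp [gS, ppMetric] <;> rfl

lemma bT_indep (c : Fin 6 → ℝ) (h : ∑ i, c i • bT i ∈ Rsp) : c = 0 := by
  obtain ⟨d, hd⟩ := (Submodule.mem_span_range_iff_exists_fun ℝ).1 h
  have hl := Fintype.linearIndependent_iff.1 T_li (Sum.elim (fun i => - d i) c) (by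
    simp only [Fintype.sum_sum_type, Sum.elim_inl, Sum.elim_inr, neg_smul,
      Finset.sum_neg_distrib]
    rw [hd]
    simp)
  funext i
  exact hl (Sum.inr i)

lemma gS_mem : gS ∈ Rsp := Submodule.subset_span ⟨none, rfl⟩

lemma evS_sumsmul {ι : Type*} [Fintype ι] (p : UU) (c : ι → ℝ) (T : ι → Fin 4 → Fin 4 → SU)
    (a b : Fin 4) : evS p ((∑ i, c i • T i) a b) = ∑ i, c i * evS p (T i a b) := by
  simp only [Finset.sum_apply, Pi.smul_apply, map_sum, map_smul, smul_eq_mul]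

lemma reducible_mem {c : Fin 6 → ℝ}
    (h : IsReducible HH UU (fun p a b => ∑ i, c i * ext0 (bT i a b).1 p)) : c = 0 := by
  obtain ⟨c₀, n, d, X, Y, hX, hY, heq⟩ := h
  apply bT_indep
  have key : ∑ i, c i • bT i = c₀ • gS + ∑ i, (d i / 2) •
      symP (fun a => mkS (fun p => X i p a) ((hX i).1 a))
        (fun a => mkS (fun p => Y i p a) ((hY i).1 a)) := by
    funext a b
    apply SU_ext
    intro p
    have h1 := heq p.1 p.2 a b
    simp only [ext0_apply] at h1
    have h2 := evS_sumsmul p c bT a b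
    have h3 := evS_sumsmul p (fun i => d i / 2) (fun i =>
      symP (fun a => mkS (fun p => X i p a) ((hX i).1 a))
        (fun a => mkS (fun p => Y i p a) ((hY i).1 a))) a b
    have h4 := gS_apply p a b
    have ev : ∀ f : SU, f.1 p = evS p f := fun _ => rfl
    rw [ev, ev, h2, Pi.add_apply, Pi.add_apply, map_add, h3]
    refine Eq.trans h1 (congrArg₂ _ ?_ ?_)
    · rw [← h4]; rfl
    · refine Finset.sum_congr rfl fun i _ => ?_
      show _ = d i / 2 * (X i p a * Y i p b + X i p b * Y i p a)
      ring
  rw [key]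
  exact Rsp.add_mem (Rsp.smul_mem _ gS_mem) (Rsp.sum_mem fun i _ =>
    Rsp.smul_mem _ (symP_mem (KV_of (hX i)) (KV_of (hY i))))

lemma spanning {K : Pt → Fin 4 → Fin 4 → ℝ} (hK : IsKillingTensor HH UU K) :
    ∃ (c : Fin 6 → ℝ) (R : Pt → Fin 4 → Fin 4 → ℝ), IsReducible HH UU R ∧
      ∀ p ∈ UU, ∀ a b, K p a b = (∑ i, c i * ext0 (bT i a b).1 p) + R p a b := by
  obtain ⟨d, hd⟩ := KT_coeff (KT_of hK)
  refine ⟨fun i => d (Sum.inr i), _, ⟨d (Sum.inl none), 27, fun i => 2 * d (Sum.inl (some i)),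
    fun i p a => ext0 (xV (pr27 i).1 a).1 p, fun i p a => ext0 (xV (pr27 i).2 a).1 p,
    fun i => KV_to (xV_KV _), fun i => KV_to (xV_KV _), fun p _ a b => rfl⟩, ?_⟩
  intro p hp a b
  have h1 := evS_sumsmul ⟨p, hp⟩ d (Sum.elim rT bT) a b
  rw [hd] at h1
  simp only [Fintype.sum_sum_type, Fintype.sum_option, Sum.elim_inl, Sum.elim_inr] at h1
  simp only [ext0_of_mem _ hp]
  rw [add_comm]
  refine Eq.trans h1 (congrArg₂ _ (congrArg₂ _ ?_ ?_) rfl)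
  · rw [← gS_apply ⟨p, hp⟩ a b]; rfl
  · refine Finset.sum_congr rfl fun i _ => ?_
    have : evS ⟨p, hp⟩ (rT (some i) a b) = (xV (pr27 i).1 a).1 ⟨p, hp⟩ * (xV (pr27 i).2 b).1 ⟨p, hp⟩
        + (xV (pr27 i).1 b).1 ⟨p, hp⟩ * (xV (pr27 i).2 a).1 ⟨p, hp⟩ := rfl
    rw [this]
    ring
/-- For the conformally flat plane wave with `A(u) = (3/16)u⁻²` on
`{u > 0}`, the quotient of the space of Killing tensors by the subspace of reducible
ones has dimension exactly 6: there are six Killing tensors, linearly independent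
modulo reducible ones, spanning all Killing tensors modulo reducible ones. -/
theorem stmt8 :
    let U : Set Pt := {p | 0 < p 0}
    let H : Pt → ℝ := fun p => (3 / 16 / (p 0) ^ 2) * ((p 2) ^ 2 + (p 3) ^ 2) / 2
    ∃ B : Fin 6 → Pt → Fin 4 → Fin 4 → ℝ,
      (∀ i, IsKillingTensor H U (B i)) ∧
      (∀ c : Fin 6 → ℝ,
        IsReducible H U (fun p a b => ∑ i, c i * B i p a b) → c = 0) ∧
      (∀ K, IsKillingTensor H U K →
        ∃ (c : Fin 6 → ℝ) (R : Pt → Fin 4 → Fin 4 → ℝ), IsReducible H U R ∧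
          ∀ p ∈ U, ∀ a b, K p a b = (∑ i, c i * B i p a b) + R p a b) := by
  intro U H
  exact ⟨fun i p a b => ext0 (bT i a b).1 p, fun i => KT_to (bT_KT i),
    fun c h => reducible_mem h, fun K hK => spanning hK⟩

end
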